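/- The composed transformation SR∘T is sound and complete for WLL DCTRSs: for every WLL DCTRS R over a signature F, (soundness) for every s ∈ T(F,V) and every term t over the signature of SR(T(R)), if ⟨s̄⟩ →*_{SR(T(R))} t, then s →*_R t̂ whenever the backtranslation t̂ is defined; and (completeness) for all s, t ∈ T(F,V), s →*_R t implies ⟨s̄⟩ →*_{SR(T(R))} ⟨t̄⟩. -/

import Mathlib

set_option autoImplicit false

/-- First-order terms over a signature `F` and variables `V`. -/
inductive Term (F : Type) (V : Type) : Type where
  | var : V → Term F V
  | app : F → List (Term F V) → Term F V

namespace Term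

variable {F V G W : Type}

/-- Application of a substitution. -/
def subst (σ : V → Term F W) : Term F V → Term F W
  | .var x => σ x
  | .app f ts => .app f (ts.attach.map (fun ⟨t, _⟩ => subst σ t))

/-- Renaming of variables. -/
def rename (g : V → W) (t : Term F V) : Term F W := t.subst (fun x => .var (g x))

/-- Mapping of function symbols. -/
def mapF (g : F → G) : Term F V → Term G V
  | .var x => .var x
  | .app f ts => .app (g f) (ts.attach.map (fun ⟨t, _⟩ => mapF g t))

/-- Number of occurrences of the variable `x` in a term. -/
def count [DecidableEq V] (x : V) : Term F V → ℕ
  | .var y => if y = x then 1 else 0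
  | .app _ ts => (ts.attach.map (fun ⟨t, _⟩ => count x t)).sum

/-- The list of variables occurring in a term (with repetitions). -/
def varList : Term F V → List V
  | .var x => [x]
  | .app _ ts => ts.attach.flatMap (fun ⟨t, _⟩ => varList t)

/-- A term is linear if every variable occurs at most once in it. -/
def Linear [DecidableEq V] (t : Term F V) : Prop := ∀ x : V, t.count x ≤ 1

/-- Well-formedness of a term with respect to an arity assignment. -/
inductive WF (ar : F → ℕ) : Term F V → Prop where
  | var (x : V) : WF ar (.var x)
  | app (f : F) (ts : List (Term F V)) :
      ts.length = ar f → (∀ t ∈ ts, WF ar t) → WF ar (.app f ts)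

end Term

/-- Number of occurrences of `x` in a sequence of terms. -/
def seqCount {F V : Type} [DecidableEq V] (x : V) (ts : List (Term F V)) : ℕ :=
  (ts.map (Term.count x)).sum

/-- An oriented conditional rewrite rule `l → r ⇐ s1 ≈ t1, …, sk ≈ tk`. -/
structure CRule (F V : Type) : Type where
  lhs : Term F V
  rhs : Term F V
  conds : List (Term F V × Term F V)

/-- A conditional term rewriting system: a set of conditional rules. -/
abbrev CTRS (F V : Type) := Set (CRule F V)

namespace CRule

variable {F V W : Type}

/-- The sequence `l, t1, …, tk` of "pattern" terms of a rule. -/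
def pats (ρ : CRule F V) : List (Term F V) := ρ.lhs :: ρ.conds.map Prod.snd

/-- The sequence `r, s1, …, sk` of "source" terms of a rule. -/
def srcs (ρ : CRule F V) : List (Term F V) := ρ.rhs :: ρ.conds.map Prod.fst

/-- Weak left-linearity: `|l,t1,…,tk|_x = 1` for every `x ∈ Var(r,s1,…,sk)`. -/
def WLL [DecidableEq V] (ρ : CRule F V) : Prop :=
  ∀ x : V, 0 < seqCount x ρ.srcs → seqCount x ρ.pats = 1

/-- Determinism: `Var(si) ⊆ Var(l, t1, …, t_{i−1})`. -/
def Det [DecidableEq V] (ρ : CRule F V) : Prop :=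
  ∀ i : ℕ, ∀ h : i < ρ.conds.length, ∀ x : V,
    0 < Term.count x (ρ.conds.get ⟨i, h⟩).1 →
    0 < seqCount x (ρ.lhs :: (ρ.conds.take i).map Prod.snd)

/-- Type 3: `Var(r) ⊆ Var(l, s1, t1, …, sk, tk)`. -/
def Type3 [DecidableEq V] (ρ : CRule F V) : Prop :=
  ∀ x : V, 0 < Term.count x ρ.rhs →
    0 < seqCount x (ρ.lhs :: ρ.conds.flatMap (fun c => [c.1, c.2]))

/-- The left-hand side is a non-variable term. -/
def LhsNonVar (ρ : CRule F V) : Prop := ∀ x : V, ρ.lhs ≠ .var x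

/-- Renaming the variables of a rule. -/
def mapV (g : V → W) (ρ : CRule F V) : CRule F W :=
  ⟨ρ.lhs.rename g, ρ.rhs.rename g, ρ.conds.map (fun c => (c.1.rename g, c.2.rename g))⟩

end CRule

/-- `R` is a deterministic CTRS (of Type 3, left-hand sides non-variable). -/
def IsDCTRS {F V : Type} [DecidableEq V] (R : CTRS F V) : Prop :=
  ∀ ρ ∈ R, ρ.Det ∧ ρ.Type3 ∧ ρ.LhsNonVar

/-- All rules of `R` are weakly left-linear. -/
def IsWLL {F V : Type} [DecidableEq V] (R : CTRS F V) : Prop := ∀ ρ ∈ R, ρ.WLL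

/-- Closure of a relation under contexts (rewriting below the root). -/
inductive CtxStep {F V : Type} (root : Term F V → Term F V → Prop) :
    Term F V → Term F V → Prop where
  | root {s t : Term F V} : root s t → CtxStep root s t
  | congr {f : F} {pre post : List (Term F V)} {s t : Term F V} :
      CtxStep root s t →
      CtxStep root (.app f (pre ++ s :: post)) (.app f (pre ++ t :: post))

/-- A root rewrite step using a rule of `R`, conditions evaluated with `prev`. -/
def RootStep {F V : Type} (R : CTRS F V) (prev : Term F V → Term F V → Prop)
    (s t : Term F V) : Prop :=
  ∃ ρ ∈ R, ∃ σ : V → Term F V,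
    s = ρ.lhs.subst σ ∧ t = ρ.rhs.subst σ ∧
    ∀ c ∈ ρ.conds, Relation.ReflTransGen prev (c.1.subst σ) (c.2.subst σ)

/-- The level-stratified reduction relation `→_{(n),R}`. -/
def LevelStep {F V : Type} (R : CTRS F V) : ℕ → Term F V → Term F V → Prop
  | 0 => fun _ _ => False
  | n + 1 => CtxStep (RootStep R (LevelStep R n))

/-- The reduction relation `→_R = ⋃_{n} →_{(n),R}`. -/
def Red {F V : Type} (R : CTRS F V) (s t : Term F V) : Prop :=
  ∃ n : ℕ, LevelStep R n s t

/-- Many-step reduction `→*_R`. -/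
def RedStar {F V : Type} (R : CTRS F V) : Term F V → Term F V → Prop :=
  Relation.ReflTransGen (Red R)

/-- `n`-fold composition of a relation. -/
def NFold {α : Type} (r : α → α → Prop) : ℕ → α → α → Prop
  | 0 => fun a b => a = b
  | n + 1 => fun a c => ∃ b, r a b ∧ NFold r n b c

/-- One-hole contexts. -/
inductive Ctx (F V : Type) : Type where
  | hole : Ctx F V
  | app : F → List (Term F V) → Ctx F V → List (Term F V) → Ctx F V

/-- Filling the hole of a context with a term. -/
def Ctx.fill {F V : Type} : Ctx F V → Term F V → Term F V
  | .hole, t => t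
  | .app f pre C post, t => .app f (pre ++ C.fill t :: post)
/-- Signature extended with the fresh symbols `U^ρ_i`. -/
abbrev UF (F V : Type) := F ⊕ (CRule F V × ℕ)

/-- Embedding of terms over `F` into terms over the extended signature `U_R(F)`. -/
def liftF {F V : Type} (t : Term F V) : Term (UF F V) V := t.mapF Sum.inl

/-- The list `X⃗_i` enumerating `Var(l, t1, …, t_{i−1})` in a fixed order. -/
def Xlist {F V : Type} [DecidableEq V] (ρ : CRule F V) (i : ℕ) : List V :=
  (ρ.lhs.varList ++ ((ρ.conds.take (i - 1)).map Prod.snd).flatMap Term.varList).dedup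

/-- A dummy condition (used as a default, never relevant). -/
def dummyCond {F V : Type} (ρ : CRule F V) : Term F V × Term F V := (ρ.lhs, ρ.lhs)

/-- The term `U^ρ_i(t, X⃗_i)`. -/
def uterm {F V : Type} [DecidableEq V] (ρ : CRule F V) (i : ℕ) (t : Term F V) :
    Term (UF F V) V :=
  .app (Sum.inr (ρ, i)) (liftF t :: (Xlist ρ i).map Term.var)

/-- Left-hand side of the `j`-th unraveled rule of `ρ` (j = 0, …, k). -/
def ulhs {F V : Type} [DecidableEq V] (ρ : CRule F V) (j : ℕ) : Term (UF F V) V :=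
  if j = 0 then liftF ρ.lhs
  else uterm ρ j (ρ.conds.getD (j - 1) (dummyCond ρ)).2

/-- Right-hand side of the `j`-th unraveled rule of `ρ` (j = 0, …, k). -/
def urhs {F V : Type} [DecidableEq V] (ρ : CRule F V) (j : ℕ) : Term (UF F V) V :=
  if j = ρ.conds.length then liftF ρ.rhs
  else uterm ρ (j + 1) (ρ.conds.getD j (dummyCond ρ)).1

/-- The unconditional rules `U(ρ)` obtained by unraveling the rule `ρ`. -/
def URules {F V : Type} [DecidableEq V] (ρ : CRule F V) : Set (CRule (UF F V) V) :=
  { r | ∃ j ≤ ρ.conds.length, r = ⟨ulhs ρ j, urhs ρ j, []⟩ }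

/-- The simultaneous unraveling `U(R)` of a DCTRS `R`. -/
def USys {F V : Type} [DecidableEq V] (R : CTRS F V) : CTRS (UF F V) V :=
  ⋃ ρ ∈ R, URules ρ

/-- `R` is ultra-WLL (`U`-WLL): every rule of `U(R)` is WLL. -/
def IsUWLL {F V : Type} [DecidableEq V] (R : CTRS F V) : Prop :=
  ∀ r ∈ USys R, r.WLL
/-- Variables used for terms over the extended signature `F̄`: original
variables plus a countable supply of fresh variables. -/
abbrev WVar (V : Type) := V ⊕ ℕ

/-- The extended signature `F̄` of the SR transformation: the original symbols
(`c̄` for constructors, `f̄` for defined symbols, with extra arguments appended),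
the fresh constant `⊥`, the fresh unary symbol `⟨·⟩`, and the fresh tuple
symbols `[ ]^ρ_j`. -/
inductive SSym (F V : Type) : Type where
  | orig : F → SSym F V
  | bot : SSym F V
  | guard : SSym F V
  | tup : CRule F V → ℕ → SSym F V

/-- Terms over the extended signature `F̄`. -/
abbrev STerm (F V : Type) := Term (SSym F V) (WVar V)

/-- The fresh constant `⊥`. -/
def botT {F V : Type} : STerm F V := .app .bot []

/-- The fresh unary symbol `⟨·⟩`. -/
def guardT {F V : Type} (t : STerm F V) : STerm F V := .app .guard [t]

/-- `t̄`: the embedding of `t ∈ T(F,V)` into `T(F̄,V)` in which all the extra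
arguments of defined symbols are filled with `⊥`.  Here `mOf f` is the number
of conditional `f`-rules (0 for constructors). -/
def barT {F V : Type} (mOf : F → ℕ) : Term F V → STerm F V
  | .var x => .var (Sum.inl x)
  | .app f ts =>
      .app (.orig f)
        ((ts.attach.map (fun ⟨t, _⟩ => barT mOf t)) ++ List.replicate (mOf f) botT)

mutual
/-- `ext(t)`: the embedding of `t ∈ T(F,V)` into `T(F̄,V)` in which the extra
arguments of defined symbols are filled with distinct fresh variables; a
counter is threaded through to keep the fresh variables distinct. -/
def extT {F V : Type} (mOf : F → ℕ) : Term F V → ℕ → STerm F V × ℕ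
  | .var x, c => (.var (Sum.inl x), c)
  | .app f ts, c =>
      let p := extTList mOf ts c
      (.app (.orig f)
         (p.1 ++ (List.range (mOf f)).map (fun k => .var (Sum.inr (p.2 + k)))),
       p.2 + mOf f)

/-- `ext` on lists of terms, threading the fresh-variable counter. -/
def extTList {F V : Type} (mOf : F → ℕ) : List (Term F V) → ℕ → List (STerm F V) × ℕ
  | [], c => ([], c)
  | t :: ts, c =>
      let p := extT mOf t c
      let q := extTList mOf ts p.2
      (p.1 :: q.1, q.2)
end

/-- The backtranslation `t̂`: the partial mapping erasing `⟨·⟩` and the extra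
arguments of defined symbols, recovering a term over `F`. -/
def hatT {F V : Type} (ar : F → ℕ) : STerm F V → Option (Term F V)
  | .var (Sum.inl x) => some (.var x)
  | .var (Sum.inr _) => none
  | .app (.orig f) ts =>
      Option.map (Term.app f)
        ((ts.take (ar f)).attach.mapM (fun t => hatT ar t.1))
  | .app .guard [t] => hatT ar t
  | .app _ _ => none
decreasing_by
  · have h1 : t.1 ∈ ts := List.mem_of_mem_take t.2
    have := List.sizeOf_lt_of_mem h1
    simp only [Term.app.sizeOf_spec]
    omega
  · simp
    omega

/-- Embedding of `T(F,V)` into the terms over the unraveling signature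
`U_R(F)` with extended variables. -/
def liftUV {F V : Type} (t : Term F V) : Term (UF F V) (WVar V) :=
  (t.mapF Sum.inl).rename Sum.inl
/-- The list `V⃗_j` enumerating `Var(t1, …, t_{j−1})` in a fixed order. -/
def Vlist {F V : Type} [DecidableEq V] (ρ : CRule F V) (j : ℕ) : List V :=
  (((ρ.conds.take (j - 1)).map Prod.snd).flatMap Term.varList).dedup

/-- The term `[⟨inner⟩, V⃗_j]^ρ_j` (used in the rewrite rules of `SR(R)`). -/
def tupT {F V : Type} [DecidableEq V] (ρ : CRule F V) (j : ℕ) (inner : STerm F V) :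
    STerm F V :=
  .app (.tup ρ j) (guardT inner :: (Vlist ρ j).map (fun v => .var (Sum.inl v)))

/-- The `j`-th unconditional rule (j = 0, …, k) obtained by the SR
transformation from the `i`-th conditional `f`-rule
`ρ : f(w1,…,wn) → r ⇐ s1 ≈ t1, …, sk ≈ tk` (where `i = idx ρ`). -/
def condSRRule {F V : Type} [DecidableEq V] (mOf : F → ℕ) (idx : CRule F V → ℕ)
    (ρ : CRule F V) (j : ℕ) : CRule (SSym F V) (WVar V) :=
  match ρ.lhs with
  | .var _ => ⟨barT mOf ρ.lhs, barT mOf ρ.rhs, []⟩  -- irrelevant (lhs is never a variable)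
  | .app f ws =>
    let i := idx ρ
    let m := mOf f
    let p := extTList mOf ws 0
    let ws' := p.1
    let c0 := p.2
    let slot : STerm F V → List (STerm F V) := fun mid =>
      (List.range m).map (fun q => if q = i - 1 then mid else .var (Sum.inr (c0 + q)))
    let k := ρ.conds.length
    ⟨(if j = 0 then
        Term.app (SSym.orig f) (ws' ++ slot botT)
      else
        Term.app (SSym.orig f)
          (ws' ++ slot (tupT ρ j (extT mOf (ρ.conds.getD (j - 1) (dummyCond ρ)).2 (c0 + m)).1))),
     (if j = k then
        guardT (barT mOf ρ.rhs)
      else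
        Term.app (SSym.orig f)
          (ws' ++ slot (tupT ρ (j + 1) (barT mOf (ρ.conds.getD j (dummyCond ρ)).1)))),
     []⟩

/-- The unconditional rule `ext(l) → ⟨r̄⟩` obtained by the SR transformation
from an unconditional rule `l → r`. -/
def uncondSRRule {F V : Type} (mOf : F → ℕ) (ρ : CRule F V) : CRule (SSym F V) (WVar V) :=
  ⟨(extT mOf ρ.lhs 0).1, guardT (barT mOf ρ.rhs), []⟩

/-- The auxiliary rule `⟨⟨x⟩⟩ → ⟨x⟩`. -/
def auxGuard {F V : Type} : CRule (SSym F V) (WVar V) :=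
  ⟨guardT (guardT (.var (Sum.inr 0))), guardT (.var (Sum.inr 0)), []⟩

/-- The auxiliary rule shifting `⟨·⟩` upward over the `i`-th argument of the
symbol `f` (and resetting the extra arguments of defined symbols):
`f̄(x1,…,⟨xi⟩,…,xn, z1,…,zm) → ⟨f̄(x1,…,xn, ⊥,…,⊥)⟩`. -/
def auxShift {F V : Type} (ar mOf : F → ℕ) (f : F) (i : ℕ) : CRule (SSym F V) (WVar V) :=
  ⟨Term.app (SSym.orig f)
     (((List.range (ar f)).map
         (fun q => if q = i then guardT (.var (Sum.inr q)) else .var (Sum.inr q))) ++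
      (List.range (mOf f)).map (fun q => .var (Sum.inr (ar f + q)))),
   guardT (Term.app (SSym.orig f)
     (((List.range (ar f)).map (fun q => Term.var (Sum.inr q))) ++
      List.replicate (mOf f) botT)),
   []⟩

/-- The SR transformation `SR(R)`: the unconditional TRS over `F̄` consisting of
the transformed rules of `R` together with the auxiliary rules `R_aux`. -/
def SRSys {F V : Type} [DecidableEq V] (R : CTRS F V) (ar mOf : F → ℕ)
    (idx : CRule F V → ℕ) : CTRS (SSym F V) (WVar V) :=
  { r | (∃ ρ ∈ R, ρ.conds = [] ∧ r = uncondSRRule mOf ρ) ∨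
        (∃ ρ ∈ R, ρ.conds ≠ [] ∧ ∃ j ≤ ρ.conds.length, r = condSRRule mOf idx ρ j) ∨
        r = auxGuard ∨
        (∃ (f : F) (i : ℕ), i < ar f ∧ r = auxShift ar mOf f i) }

/-- Well-formedness of the data `(ar, mOf, idx)` describing the signature `F`
(with arities `ar`), the number `mOf f` of conditional `f`-rules of `R`, and
the ranking `idx` of the conditional rules of each defined symbol by some
arbitrary but fixed order. -/
def GoodSetup {F V : Type} [DecidableEq V] (R : CTRS F V) (ar mOf : F → ℕ)
    (idx : CRule F V → ℕ) : Prop :=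
  (∀ ρ ∈ R, ρ.lhs.WF ar ∧ ρ.rhs.WF ar ∧ ∀ c ∈ ρ.conds, c.1.WF ar ∧ c.2.WF ar) ∧
  (∀ ρ ∈ R, ∃ (f : F) (ws : List (Term F V)), ρ.lhs = Term.app f ws) ∧
  (∀ ρ ∈ R, ρ.conds ≠ [] →
     ∀ (f : F) (ws : List (Term F V)), ρ.lhs = Term.app f ws →
       1 ≤ idx ρ ∧ idx ρ ≤ mOf f) ∧
  (∀ ρ₁, ρ₁ ∈ R → ∀ ρ₂, ρ₂ ∈ R → ρ₁.conds ≠ [] → ρ₂.conds ≠ [] →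
     ∀ (f : F) (ws₁ ws₂ : List (Term F V)),
       ρ₁.lhs = Term.app f ws₁ → ρ₂.lhs = Term.app f ws₂ →
       idx ρ₁ = idx ρ₂ → ρ₁ = ρ₂) ∧
  (∀ (f : F) (i : ℕ), 1 ≤ i → i ≤ mOf f →
     ∃ ρ ∈ R, ρ.conds ≠ [] ∧ (∃ ws : List (Term F V), ρ.lhs = Term.app f ws) ∧ idx ρ = i)
/-- The unraveled system `U(R)` with its rules considered over the extended
variable set `WVar V` (so that it rewrites the terms in the image of `Φ`). -/
def USysW {F V : Type} [DecidableEq V] (R : CTRS F V) : CTRS (UF F V) (WVar V) :=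
  { r | ∃ r' ∈ USys R, r = r'.mapV Sum.inl }

/-- Membership in the set `Φ(t)`: `PhiMem R ar mOf idx t u` states that
`u ∈ Φ(t)`, where `Φ` is the mapping (defined mutually with the auxiliary
mapping `Ψ`) from reachable terms of `T(F̄,V)` to sets of terms of
`T(U_R(F),V)`:
* `Φ(x) = {x}` for a variable `x`;
* `Φ(⟨t⟩) = Φ(t)`;
* for an original symbol `f` applied to arguments `ts`, `Φ` contains
  `f(t'1,…,t'n)` for all `t'p ∈ Φ(tp)` of the first `ar f` arguments (this is
  the clause for constructors and the clause `Ψ(f̄(t⃗,⊥,…,⊥))` for defined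
  symbols), and
* for each `i`-th extra argument of a defined symbol `f` that is a tuple
  `[⟨t'⟩, t'1,…,t'_{nj}]^ρ_j` (where `ρ` is the `i`-th conditional `f`-rule),
  `Φ` contains all terms `U^ρ_j(u', u⃗')` with `u' ∈ Φ(t')` and
  `u⃗' ∈ Φ(σ(X⃗j))`, where `σ` is a substitution with `σ(V⃗j) = t'1,…,t'_{nj}`
  and `σ(ext(w1),…,ext(wn))` equal to the main arguments of the node. -/
inductive PhiMem {F V : Type} [DecidableEq V] (R : CTRS F V) (ar mOf : F → ℕ)
    (idx : CRule F V → ℕ) : STerm F V → Term (UF F V) (WVar V) → Prop where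
  | var (x : WVar V) : PhiMem R ar mOf idx (.var x) (.var x)
  | guard {t : STerm F V} {u : Term (UF F V) (WVar V)} :
      PhiMem R ar mOf idx t u → PhiMem R ar mOf idx (guardT t) u
  | orig {f : F} {ts : List (STerm F V)} {us : List (Term (UF F V) (WVar V))} :
      us.length = (ts.take (ar f)).length →
      (∀ p ∈ List.zip (ts.take (ar f)) us, PhiMem R ar mOf idx p.1 p.2) →
      PhiMem R ar mOf idx (.app (.orig f) ts) (.app (Sum.inl f) us)
  | cond {f : F} {ts : List (STerm F V)} {ρ : CRule F V} {ws : List (Term F V)}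
      {j : ℕ} {tin : STerm F V} {vargs : List (STerm F V)}
      {σ : WVar V → STerm F V} {u : Term (UF F V) (WVar V)}
      {us : List (Term (UF F V) (WVar V))} :
      ρ ∈ R → ρ.conds ≠ [] → ρ.lhs = .app f ws →
      1 ≤ j → j ≤ ρ.conds.length →
      (ts.drop (ar f))[idx ρ - 1]? = some (.app (.tup ρ j) (guardT tin :: vargs)) →
      (Vlist ρ j).map (fun v => σ (Sum.inl v)) = vargs →
      (extTList mOf ws 0).1.map (Term.subst σ) = ts.take (ar f) →
      PhiMem R ar mOf idx tin u →
      us.length = (Xlist ρ j).length →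
      (∀ p ∈ List.zip (Xlist ρ j) us, PhiMem R ar mOf idx (σ (Sum.inl p.1)) p.2) →
      PhiMem R ar mOf idx (.app (.orig f) ts) (.app (Sum.inr (ρ, j)) (u :: us))

/-- The set `Φ(t)`. -/
def Phi {F V : Type} [DecidableEq V] (R : CTRS F V) (ar mOf : F → ℕ)
    (idx : CRule F V → ℕ) (t : STerm F V) : Set (Term (UF F V) (WVar V)) :=
  { u | PhiMem R ar mOf idx t u }

/-- `σ' ∈ Φ(σ)`, the extension of `Φ` to substitutions:
`Dom(σ') ⊆ Dom(σ)` and `xσ' ∈ Φ(xσ)` for every `x ∈ Dom(σ)`. -/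
def PhiSub {F V : Type} [DecidableEq V] (R : CTRS F V) (ar mOf : F → ℕ)
    (idx : CRule F V → ℕ) (σ : WVar V → STerm F V)
    (σ' : WVar V → Term (UF F V) (WVar V)) : Prop :=
  ∀ x : WVar V, PhiMem R ar mOf idx (σ x) (σ' x)

/-- The relation `s ⇝ t`: for each `t' ∈ Φ(t)` there exists `s' ∈ Φ(s)` with
`s' →*_{U(R)} t'`. -/
def Leadsto {F V : Type} [DecidableEq V] (R : CTRS F V) (ar mOf : F → ℕ)
    (idx : CRule F V → ℕ) (s t : STerm F V) : Prop :=
  ∀ u, PhiMem R ar mOf idx t u →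
    ∃ u', PhiMem R ar mOf idx s u' ∧ RedStar (USysW R) u' u

/-- A term of `T(F̄,V)` is reachable if it is a subterm of some term reachable
by `SR(R)` from `⟨s̄⟩` for some `s ∈ T(F,V)`. -/
def SRReachable {F V : Type} [DecidableEq V] (R : CTRS F V) (ar mOf : F → ℕ)
    (idx : CRule F V → ℕ) (t : STerm F V) : Prop :=
  ∃ (s : Term F V) (C : Ctx (SSym F V) (WVar V)),
    s.WF ar ∧ RedStar (SRSys R ar mOf idx) (guardT (barT mOf s)) (C.fill t)

/-- The restriction `σ|_X` of a substitution to the variables of a term `t`. -/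
def restrictTo {F V : Type} [DecidableEq V] (σ : WVar V → STerm F V) (t : STerm F V) :
    WVar V → STerm F V :=
  fun x => if 0 < t.count x then σ x else .var x
/-- Embedding of a rule over `F` into the signature `F ⊕ ℕ` extended with the
fresh tuple constructors `tuple_j` (encoded as `Sum.inr j`). -/
def CRule.liftT {F V : Type} (ρ : CRule F V) : CRule (F ⊕ ℕ) V :=
  ⟨ρ.lhs.mapF Sum.inl, ρ.rhs.mapF Sum.inl,
   ρ.conds.map (fun c => (c.1.mapF Sum.inl, c.2.mapF Sum.inl))⟩

/-- The variable `x` occurs somewhere in the rule `ρ`. -/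
def OccursInRule {F V : Type} [DecidableEq V] (ρ : CRule F V) (x : V) : Prop :=
  0 < seqCount x (ρ.lhs :: ρ.rhs :: ρ.conds.flatMap (fun c => [c.1, c.2]))

/-- `ρ'` is a result of applying the transformation `𝕋` to the rule `ρ`:
unconditional rules are kept (embedded into the extended signature); for a
conditional rule, every occurrence of a variable occurring more than once in
`l, t1, …, tk` is replaced by a distinct fresh variable (yielding `l'` and
`t'_1, …, t'_k`), and the condition
`tuple_j(x1,…,xj) ≈ tuple_j(x1σ,…,xjσ)` is appended, where `x1, …, xj` are the
introduced fresh variables and `σ` is the renaming mapping them back to the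
original variables. -/
def IsTRule {F V : Type} [DecidableEq V] (ρ : CRule F V) (ρ' : CRule (F ⊕ ℕ) V) : Prop :=
  (ρ.conds = [] ∧ ρ' = ρ.liftT) ∨
  (ρ.conds ≠ [] ∧
    ∃ (xs : List V) (σ : V → V) (l' : Term (F ⊕ ℕ) V) (ts' : List (Term (F ⊕ ℕ) V)),
      xs.Nodup ∧
      (∀ x ∈ xs, ¬ OccursInRule ρ x) ∧
      (∀ x : V, x ∉ xs → σ x = x) ∧
      ts'.length = ρ.conds.length ∧
      l'.rename σ = ρ.lhs.mapF Sum.inl ∧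
      (∀ (i : ℕ) (h : i < ρ.conds.length) (h' : i < ts'.length),
        (ts'.get ⟨i, h'⟩).rename σ = ((ρ.conds.get ⟨i, h⟩).2).mapF Sum.inl) ∧
      (∀ x ∈ xs, seqCount x (l' :: ts') = 1) ∧
      (∀ x : V, x ∉ xs →
        seqCount x (l' :: ts') =
          if seqCount x ρ.liftT.pats ≤ 1 then seqCount x ρ.liftT.pats else 0) ∧
      ρ' = ⟨l', ρ.rhs.mapF Sum.inl,
            (List.zip (ρ.conds.map (fun c => c.1.mapF Sum.inl)) ts') ++
              [(.app (Sum.inr xs.length) (xs.map Term.var),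
                .app (Sum.inr xs.length) (xs.map (fun x => Term.var (σ x))))]⟩)

/-- `R'` is a result of applying the transformation `𝕋` to the CTRS `R`,
i.e., `R' = { 𝕋(ρ) : ρ ∈ R }`. -/
def IsT {F V : Type} [DecidableEq V] (R : CTRS F V) (R' : CTRS (F ⊕ ℕ) V) : Prop :=
  (∀ ρ ∈ R, ∃ ρ' ∈ R', IsTRule ρ ρ') ∧ (∀ ρ' ∈ R', ∃ ρ ∈ R, IsTRule ρ ρ')

/-- Projection of a term over the extended signature `F ⊕ ℕ` (with the tuple
constructors of `𝕋`) back to a term over `F` (partial). -/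
def unliftT {F V : Type} : Term (F ⊕ ℕ) V → Option (Term F V)
  | .var x => some (.var x)
  | .app (Sum.inl f) ts =>
      Option.map (Term.app f) (ts.attach.mapM (fun t => unliftT t.1))
  | .app (Sum.inr _) _ => none
decreasing_by
  have := List.sizeOf_lt_of_mem t.2
  simp only [Term.app.sizeOf_spec]
  omega

set_option autoImplicit false

namespace Term
variable {F V G W X : Type}

theorem ind {P : Term F V → Prop} (hv : ∀ x, P (.var x))
    (ha : ∀ f ts, (∀ t ∈ ts, P t) → P (.app f ts)) : ∀ t, P t
  | .var x => hv x
  | .app f ts => ha f ts (fun t _ => ind hv ha t)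

@[simp] theorem subst_var (σ : V → Term F W) (x : V) : (Term.var x).subst σ = σ x := by
  simp [subst]

@[simp] theorem subst_app (σ : V → Term F W) (f : F) (ts : List (Term F V)) :
    (Term.app f ts).subst σ = .app f (ts.map (subst σ)) := by
  simp [subst]

@[simp] theorem mapF_var (g : F → G) (x : V) : (Term.var x : Term F V).mapF g = .var x := by
  simp [mapF]

@[simp] theorem mapF_app (g : F → G) (f : F) (ts : List (Term F V)) :
    (Term.app f ts).mapF g = .app (g f) (ts.map (mapF g)) := by
  simp [mapF]

@[simp] theorem count_var [DecidableEq V] (x y : V) :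
    (Term.var y : Term F V).count x = if y = x then 1 else 0 := by
  simp [count]

@[simp] theorem count_app [DecidableEq V] (x : V) (f : F) (ts : List (Term F V)) :
    (Term.app f ts).count x = (ts.map (count x)).sum := by
  simp [count]

theorem count_pos_var [DecidableEq V] (x y : V) :
    0 < (Term.var y : Term F V).count x ↔ y = x := by
  rw [count_var]; split <;> simp_all

@[simp] theorem varList_var (x : V) : (Term.var x : Term F V).varList = [x] := by
  simp [varList]

@[simp] theorem varList_app (f : F) (ts : List (Term F V)) :
    (Term.app f ts).varList = ts.flatMap varList := by
  simp [varList]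

theorem sum_pos {α : Type} (g : α → ℕ) (l : List α) : 0 < (l.map g).sum ↔ ∃ a ∈ l, 0 < g a := by
  induction l with
  | nil => simp
  | cons a l ih =>
    simp only [List.map_cons, List.sum_cons, List.mem_cons, exists_eq_or_imp, ← ih]
    omega

theorem sum_pair {α : Type} (g : α → ℕ) (l : List α) (i j : ℕ) (a b : α) (hij : i ≠ j)
    (hi : l[i]? = some a) (hj : l[j]? = some b) : g a + g b ≤ (l.map g).sum := by
  induction l generalizing i j with
  | nil => simp at hi
  | cons c l ih =>
    have key : ∀ (i : ℕ) (a : α), l[i]? = some a → g a ≤ (l.map g).sum := by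
      intro i a h
      exact List.single_le_sum (by simp) _ (List.mem_map_of_mem (List.mem_of_getElem? h))
    simp only [List.map_cons, List.sum_cons]
    rcases i with _ | i <;> rcases j with _ | j
    · omega
    · simp at hi hj; subst hi; have := key _ _ hj; omega
    · simp at hi hj; subst hj; have := key _ _ hi; omega
    · simp at hi hj; have := ih i j (by omega) hi hj; omega

theorem count_pos_app [DecidableEq V] (x : V) (f : F) (ts : List (Term F V)) :
    0 < (Term.app f ts).count x ↔ ∃ t ∈ ts, 0 < t.count x := by
  rw [count_app, sum_pos]

theorem subst_congr [DecidableEq V] (σ τ : V → Term F W) (t : Term F V)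
    (h : ∀ x, 0 < t.count x → σ x = τ x) : t.subst σ = t.subst τ := by
  induction t using Term.ind with
  | hv x => simpa using h x
  | ha f ts ih =>
    simp only [subst_app, app.injEq, true_and]
    apply List.map_congr_left
    intro t ht
    exact ih t ht (fun x hx => h x ((count_pos_app x f ts).2 ⟨t, ht, hx⟩))

theorem subst_subst (σ : V → Term F W) (τ : W → Term F X) (t : Term F V) :
    (t.subst σ).subst τ = t.subst (fun x => (σ x).subst τ) := by
  induction t using Term.ind with
  | hv x => simp
  | ha f ts ih =>
    simp only [subst_app, app.injEq, true_and, List.map_map]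
    apply List.map_congr_left
    intro t ht
    exact ih t ht

theorem subst_id (t : Term F V) : t.subst Term.var = t := by
  induction t using Term.ind with
  | hv x => simp
  | ha f ts ih =>
    simp only [subst_app, app.injEq, true_and]
    conv_rhs => rw [← List.map_id ts]
    apply List.map_congr_left
    intro t ht
    exact ih t ht

theorem mapF_subst (g : F → G) (σ : V → Term F W) (t : Term F V) :
    (t.subst σ).mapF g = (t.mapF g).subst (fun x => (σ x).mapF g) := by
  induction t using Term.ind with
  | hv x => simp
  | ha f ts ih =>
    simp only [subst_app, mapF_app, app.injEq, true_and, List.map_map]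
    apply List.map_congr_left
    intro t ht
    exact ih t ht

@[simp] theorem count_mapF [DecidableEq V] (g : F → G) (x : V) (t : Term F V) :
    (t.mapF g).count x = t.count x := by
  induction t using Term.ind with
  | hv y => simp
  | ha f ts ih =>
    simp only [mapF_app, count_app, List.map_map]
    congr 1
    apply List.map_congr_left
    intro t ht
    exact ih t ht

theorem mem_varList [DecidableEq V] (x : V) (t : Term F V) : x ∈ t.varList ↔ 0 < t.count x := by
  induction t using Term.ind with
  | hv y => rw [count_pos_var, varList_var, List.mem_singleton, eq_comm]
  | ha f ts ih =>
    rw [count_pos_app, varList_app, List.mem_flatMap]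
    constructor
    · rintro ⟨t, ht, h⟩; exact ⟨t, ht, (ih t ht).1 h⟩
    · rintro ⟨t, ht, h⟩; exact ⟨t, ht, (ih t ht).2 h⟩

/-- well-formedness of a substitution instance -/
theorem WF.subst_iff [DecidableEq V] (ar : F → ℕ) (σ : V → Term F W) (t : Term F V)
    (ht : t.WF ar) : (t.subst σ).WF ar ↔ ∀ x, 0 < t.count x → (σ x).WF ar := by
  induction t using Term.ind with
  | hv y => simp only [count_pos_var, subst_var]; simp
  | ha f ts ih =>
    cases ht with
    | app _ _ hl hts =>
    rw [subst_app]
    constructor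
    · intro h x hx
      cases h with
      | app _ _ hl' hts' =>
      obtain ⟨t, ht, hx⟩ := (count_pos_app x f ts).1 hx
      exact (ih t ht (hts t ht)).1 (hts' _ (List.mem_map_of_mem ht)) x hx
    · intro h
      refine WF.app _ _ (by simpa using hl) ?_
      intro t ht
      obtain ⟨t', ht', rfl⟩ := List.mem_map.1 ht
      exact (ih t' ht' (hts t' ht')).2 (fun x hx => h x ((count_pos_app x f ts).2 ⟨_, ht', hx⟩))

theorem WF.of_rename (ar : F → ℕ) (g : V → W) (t : Term F V) :
    (t.rename g).WF ar ↔ t.WF ar := by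
  unfold rename
  induction t using Term.ind with
  | hv y => simp; exact ⟨fun _ => .var _, fun _ => .var _⟩
  | ha f ts ih =>
    rw [subst_app]
    constructor
    · intro h
      cases h with
      | app _ _ hl h =>
      refine WF.app _ _ (by simpa using hl) (fun t ht => (ih t ht).1 (h _ (List.mem_map_of_mem ht)))
    · intro h
      cases h with
      | app _ _ hl h =>
      refine WF.app _ _ (by simpa using hl) ?_
      intro t ht
      obtain ⟨t', ht', rfl⟩ := List.mem_map.1 ht
      exact (ih t' ht').2 (h _ ht')

theorem count_rename_pos [DecidableEq V] [DecidableEq W] (g : V → W) (x : W) (t : Term F V) :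
    0 < (t.rename g).count x ↔ ∃ z, g z = x ∧ 0 < t.count z := by
  unfold rename
  induction t using Term.ind with
  | hv y => simp only [count_pos_var, subst_var]; simp
  | ha f ts ih =>
    rw [subst_app, count_pos_app]
    simp only [List.mem_map, exists_exists_and_eq_and, count_pos_app]
    constructor
    · rintro ⟨t, ht, h⟩
      obtain ⟨z, hz, h⟩ := (ih t ht).1 h
      exact ⟨z, hz, t, ht, h⟩
    · rintro ⟨z, hz, t, ht, h⟩
      exact ⟨t, ht, (ih t ht).2 ⟨z, hz, h⟩⟩

theorem count_rename_add [DecidableEq V] (g : V → V) (x z : V) (hx : g x = x) (hz : g z = x)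
    (hne : z ≠ x) (t : Term F V) :
    t.count x + t.count z ≤ (t.rename g).count x := by
  unfold rename
  induction t using Term.ind with
  | hv y =>
    simp only [subst_var, count_var]
    by_cases h1 : y = x
    · subst h1; simp [hx, hne.symm]
    · by_cases h2 : y = z
      · subst h2; simp [hz, h1]
      · simp [h1, h2]
  | ha f ts ih =>
    simp only [subst_app, count_app, List.map_map]
    clear hx hz hne
    induction ts with
    | nil => simp
    | cons t ts ih2 =>
      have h1 := ih t (by simp)
      have h2 := ih2 (fun t ht => ih t (by simp [ht]))
      simp only [List.map_cons, List.sum_cons, Function.comp] at *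
      omega

end Term

section seq
variable {F V G : Type} [DecidableEq V]

theorem seqCount_pos (x : V) (ts : List (Term F V)) :
    0 < seqCount x ts ↔ ∃ t ∈ ts, 0 < t.count x := Term.sum_pos _ _

@[simp] theorem seqCount_cons (x : V) (t : Term F V) (ts : List (Term F V)) :
    seqCount x (t :: ts) = t.count x + seqCount x ts := by simp [seqCount]

@[simp] theorem seqCount_nil (x : V) : seqCount x ([] : List (Term F V)) = 0 := by simp [seqCount]

@[simp] theorem seqCount_append (x : V) (ts us : List (Term F V)) :
    seqCount x (ts ++ us) = seqCount x ts + seqCount x us := by simp [seqCount]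

theorem seqCount_mapF (x : V) (g : F → G) (ts : List (Term F V)) :
    seqCount x (ts.map (Term.mapF g)) = seqCount x ts := by
  induction ts with
  | nil => simp
  | cons t ts ih => simp [ih]

theorem seqCount_rename_add (g : V → V) (x z : V) (hx : g x = x) (hz : g z = x)
    (hne : z ≠ x) (ts : List (Term F V)) :
    seqCount x ts + seqCount z ts ≤ seqCount x (ts.map (Term.rename g)) := by
  induction ts with
  | nil => simp
  | cons t ts ih =>
    have := Term.count_rename_add g x z hx hz hne t
    simp only [List.map_cons, seqCount_cons]
    omega
end seq

theorem rtg_mono {α : Type} {r p : α → α → Prop} {a b : α} (h : Relation.ReflTransGen r a b)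
    (hp : ∀ a b, r a b → p a b) : Relation.ReflTransGen p a b := by
  induction h with
  | refl => exact .refl
  | tail _ h2 ih => exact ih.tail (hp _ _ h2)

theorem rtg_lift {α β : Type} {r : α → α → Prop} {p : β → β → Prop} {a b : α} (f : α → β)
    (h : Relation.ReflTransGen r a b)
    (hp : ∀ a b, r a b → p (f a) (f b)) : Relation.ReflTransGen p (f a) (f b) := by
  induction h with
  | refl => exact .refl
  | tail _ h2 ih => exact ih.tail (hp _ _ h2)

section red
variable {F V : Type} {R : CTRS F V}

theorem CtxStep.mono {r r' : Term F V → Term F V → Prop} (h : ∀ s t, r s t → r' s t)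
    {s t : Term F V} (hs : CtxStep r s t) : CtxStep r' s t := by
  induction hs with
  | root h1 => exact .root (h _ _ h1)
  | congr _ ih => exact .congr ih

theorem LevelStep.succ (n : ℕ) : ∀ s t, LevelStep R n s t → LevelStep R (n+1) s t := by
  induction n with
  | zero => intro s t h; exact h.elim
  | succ n ih =>
    intro s t h
    refine CtxStep.mono ?_ h
    rintro s t ⟨ρ, hρ, σ, h1, h2, h3⟩
    exact ⟨ρ, hρ, σ, h1, h2, fun c hc => rtg_mono (h3 c hc) ih⟩

theorem LevelStep.le {n m : ℕ} (h : n ≤ m) : ∀ s t, LevelStep R n s t → LevelStep R m s t := by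
  induction h with
  | refl => exact fun _ _ h => h
  | step _ ih => exact fun s t h => LevelStep.succ _ _ _ (ih s t h)

theorem RedStar.level {s t : Term F V} (h : RedStar R s t) :
    ∃ n, Relation.ReflTransGen (LevelStep R n) s t := by
  induction h with
  | refl => exact ⟨0, .refl⟩
  | tail _ h2 ih =>
    obtain ⟨n, hn⟩ := ih
    obtain ⟨m, hm⟩ := h2
    exact ⟨max n m, (rtg_mono hn (LevelStep.le (le_max_left _ _))).tail
      (LevelStep.le (le_max_right _ _) _ _ hm)⟩

theorem RedStar.levels (σ : V → Term F V) (cs : List (Term F V × Term F V))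
    (h : ∀ c ∈ cs, RedStar R (c.1.subst σ) (c.2.subst σ)) :
    ∃ n, ∀ c ∈ cs, Relation.ReflTransGen (LevelStep R n) (c.1.subst σ) (c.2.subst σ) := by
  induction cs with
  | nil => exact ⟨0, by simp⟩
  | cons c cs ih =>
    obtain ⟨n, hn⟩ := ih (fun c hc => h c (by simp [hc]))
    obtain ⟨m, hm⟩ := (h c (by simp)).level
    refine ⟨max n m, ?_⟩
    intro c' hc'
    rcases List.mem_cons.1 hc' with rfl | hc'
    · exact rtg_mono hm (LevelStep.le (le_max_right _ _))
    · exact rtg_mono (hn c' hc') (LevelStep.le (le_max_left _ _))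

theorem Red.fire {ρ : CRule F V} (hρ : ρ ∈ R) (σ : V → Term F V)
    (h : ∀ c ∈ ρ.conds, RedStar R (c.1.subst σ) (c.2.subst σ)) :
    Red R (ρ.lhs.subst σ) (ρ.rhs.subst σ) := by
  obtain ⟨n, hn⟩ := RedStar.levels σ ρ.conds h
  exact ⟨n+1, .root ⟨ρ, hρ, σ, rfl, rfl, hn⟩⟩

theorem Red.congr {f : F} {pre post : List (Term F V)} {s t : Term F V} (h : Red R s t) :
    Red R (.app f (pre ++ s :: post)) (.app f (pre ++ t :: post)) := by
  obtain ⟨n, hn⟩ := h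
  rcases n with _ | n
  · exact hn.elim
  · exact ⟨n+1, .congr hn⟩

theorem RedStar.congr1 {f : F} {pre post : List (Term F V)} {s t : Term F V} (h : RedStar R s t) :
    RedStar R (.app f (pre ++ s :: post)) (.app f (pre ++ t :: post)) :=
  rtg_lift (fun s => Term.app f (pre ++ s :: post)) h (fun _ _ h => Red.congr h)

theorem RedStar.congr {f : F} {ss ts : List (Term F V)} (h : List.Forall₂ (RedStar R) ss ts)
    (pre : List (Term F V)) :
    RedStar R (.app f (pre ++ ss)) (.app f (pre ++ ts)) := by
  induction h generalizing pre with
  | nil => exact .refl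
  | @cons s t ss ts h1 _ ih =>
    refine Relation.ReflTransGen.trans (RedStar.congr1 h1) ?_
    have := ih (pre ++ [t])
    simp only [List.append_assoc, List.singleton_append] at this
    exact this

theorem RedStar.congr' {f : F} {ss ts : List (Term F V)} (h : List.Forall₂ (RedStar R) ss ts) :
    RedStar R (.app f ss) (.app f ts) := RedStar.congr h []

theorem RedStar.congrIdx {f : F} {ss ts : List (Term F V)} (hl : ss.length = ts.length)
    (h : ∀ (i : ℕ) s t, ss[i]? = some s → ts[i]? = some t → RedStar R s t) :
    RedStar R (.app f ss) (.app f ts) := by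
  apply RedStar.congr'
  rw [List.forall₂_iff_get]
  refine ⟨hl, fun i h1 h2 => h i _ _ ?_ ?_⟩ <;> simp [h1, h2]

theorem RedStar.subst [DecidableEq V] {W : Type} [DecidableEq W] (t : Term F W)
    (σ τ : W → Term F V) (h : ∀ x, 0 < t.count x → RedStar R (σ x) (τ x)) :
    RedStar R (t.subst σ) (t.subst τ) := by
  induction t using Term.ind with
  | hv x => simpa using h x
  | ha f ts ih =>
    simp only [Term.subst_app]
    apply RedStar.congr'
    rw [List.forall₂_map_left_iff, List.forall₂_map_right_iff, List.forall₂_same]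
    intro t ht
    exact ih t ht (fun x hx => h x ((Term.count_pos_app x f ts).2 ⟨t, ht, hx⟩))

end red

set_option autoImplicit false

section srbasic
variable {F V : Type}

@[simp] theorem barT_var (mOf : F → ℕ) (x : V) :
    barT mOf (.var x : Term F V) = .var (Sum.inl x) := by simp [barT]

@[simp] theorem barT_app (mOf : F → ℕ) (f : F) (ts : List (Term F V)) :
    barT mOf (.app f ts) =
      .app (.orig f) (ts.map (barT mOf) ++ List.replicate (mOf f) botT) := by simp [barT]

theorem extTList_length (mOf : F → ℕ) (ws : List (Term F V)) (c : ℕ) :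
    (extTList mOf ws c).1.length = ws.length := by
  induction ws generalizing c with
  | nil => simp [extTList]
  | cons w ws ih => simp [extTList, ih]

theorem extTList_get (mOf : F → ℕ) (ws : List (Term F V)) (c : ℕ) (i : ℕ) (w : Term F V)
    (h : ws[i]? = some w) : ∃ c', (extTList mOf ws c).1[i]? = some (extT mOf w c').1 := by
  induction ws generalizing c i with
  | nil => simp at h
  | cons w ws ih =>
    rcases i with _ | i
    · simp at h; subst h; exact ⟨c, by simp [extTList]⟩
    · simp at h
      obtain ⟨c', hc'⟩ := ih (extT mOf w c).2 i h
      exact ⟨c', by simpa [extTList] using hc'⟩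

theorem extT_app (mOf : F → ℕ) (f : F) (ws : List (Term F V)) (c : ℕ) :
    (extT mOf (.app f ws) c).1 = .app (.orig f)
      ((extTList mOf ws c).1 ++ (List.range (mOf f)).map
        (fun k => .var (Sum.inr ((extTList mOf ws c).2 + k)))) := by simp [extT]

/-- The slot part of a transformed rule. -/
def slotL (m i c0 : ℕ) (mid : STerm F V) : List (STerm F V) :=
  (List.range m).map (fun q => if q = i - 1 then mid else .var (Sum.inr (c0 + q)))

/-- Root steps of the unconditional system `SR(R)`. -/
def SRoot [DecidableEq V] (R : CTRS F V) (ar mOf : F → ℕ) (idx : CRule F V → ℕ)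
    (s t : STerm F V) : Prop :=
  ∃ r ∈ SRSys R ar mOf idx, ∃ σ, s = r.lhs.subst σ ∧ t = r.rhs.subst σ

variable [DecidableEq V] {R : CTRS F V} {ar mOf : F → ℕ} {idx : CRule F V → ℕ}

theorem SRSys_conds {r : CRule (SSym F V) (WVar V)} (h : r ∈ SRSys R ar mOf idx) :
    r.conds = [] := by
  rcases h with ⟨ρ, _, _, rfl⟩ | ⟨ρ, _, _, j, _, rfl⟩ | rfl | ⟨f, i, _, rfl⟩
  · rfl
  · unfold condSRRule; split <;> rfl
  · rfl
  · rfl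

theorem Red_SR {s t : STerm F V} : Red (SRSys R ar mOf idx) s t ↔
    CtxStep (SRoot R ar mOf idx) s t := by
  constructor
  · rintro ⟨n, h⟩
    rcases n with _ | n
    · exact h.elim
    · refine CtxStep.mono ?_ h
      rintro s t ⟨r, hr, σ, h1, h2, _⟩
      exact ⟨r, hr, σ, h1, h2⟩
  · intro h
    refine ⟨1, CtxStep.mono ?_ h⟩
    rintro s t ⟨r, hr, σ, h1, h2⟩
    exact ⟨r, hr, σ, h1, h2, by simp [SRSys_conds hr]⟩

theorem condSR_lhs (ρ : CRule F V) (f : F) (ws : List (Term F V)) (hl : ρ.lhs = .app f ws)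
    (j : ℕ) : (condSRRule mOf idx ρ j).lhs = .app (.orig f) ((extTList mOf ws 0).1 ++
      slotL (mOf f) (idx ρ) (extTList mOf ws 0).2
        (if j = 0 then botT else tupT ρ j (extT mOf (ρ.conds.getD (j - 1) (dummyCond ρ)).2
          ((extTList mOf ws 0).2 + mOf f)).1)) := by
  unfold condSRRule
  rw [hl]
  dsimp only
  split <;> rfl

theorem condSR_rhs (ρ : CRule F V) (f : F) (ws : List (Term F V)) (hl : ρ.lhs = .app f ws)
    (j : ℕ) : (condSRRule mOf idx ρ j).rhs =
      if j = ρ.conds.length then guardT (barT mOf ρ.rhs) else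
      .app (.orig f) ((extTList mOf ws 0).1 ++
      slotL (mOf f) (idx ρ) (extTList mOf ws 0).2
        (tupT ρ (j+1) (barT mOf (ρ.conds.getD j (dummyCond ρ)).1))) := by
  unfold condSRRule
  rw [hl]
  rfl

/-- Conditions on the rules ensuring soundness. -/
structure NiceRule (ρ : CRule F V) : Prop where
  unc : ρ.conds = [] → ∀ x, 0 < ρ.rhs.count x → ρ.lhs.count x = 1
  linL : ρ.conds ≠ [] → ∀ x, ρ.lhs.count x ≤ 1
  lin : ∀ (j : ℕ) c, ρ.conds[j]? = some c → j + 1 < ρ.conds.length → ∀ x, c.2.count x ≤ 1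
  linR : ∀ (j : ℕ) c, ρ.conds[j]? = some c → ∀ x, 0 < ρ.rhs.count x → c.2.count x ≤ 1
  disj : ∀ (j : ℕ) c, ρ.conds[j]? = some c → ∀ x, 0 < c.2.count x →
    seqCount x (ρ.lhs :: (ρ.conds.take j).map Prod.snd) = 0
  det : ∀ (j : ℕ) c, ρ.conds[j]? = some c → ∀ x, 0 < c.1.count x →
    0 < seqCount x (ρ.lhs :: (ρ.conds.take j).map Prod.snd)
  rhsv : ρ.conds ≠ [] → ∀ x, 0 < ρ.rhs.count x → 0 < seqCount x ρ.pats

/-- Matching of a main pattern, ignoring the extra arguments. -/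
inductive Mat (ar : F → ℕ) (σ : V → STerm F V) : Term F V → STerm F V → Prop where
  | var (x : V) : Mat ar σ (.var x) (σ x)
  | app (f : F) (ws : List (Term F V)) (ts : List (STerm F V)) :
      ws.length = ar f → ar f ≤ ts.length →
      (∀ (i : ℕ) w t, ws[i]? = some w → ts[i]? = some t → Mat ar σ w t) →
      Mat ar σ (.app f ws) (.app (.orig f) ts)

theorem Mat.ext (σ : WVar V → STerm F V) (w : Term F V) (hw : w.WF ar) (c : ℕ) :
    Mat ar (fun x => σ (Sum.inl x)) w ((extT mOf w c).1.subst σ) := by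
  induction w using Term.ind generalizing c with
  | hv x =>
    simp only [extT, Term.subst_var]
    exact Mat.var (σ := fun x => σ (Sum.inl x)) x
  | ha f ws ih =>
    cases hw with
    | app _ _ hl hws =>
    rw [extT_app, Term.subst_app]
    refine Mat.app f ws _ hl (by simp [extTList_length]; omega) ?_
    intro i w t h1 h2
    obtain ⟨c', hc'⟩ := extTList_get mOf ws c i w h1
    have hi : i < (extTList mOf ws c).1.length := (List.getElem?_eq_some_iff.1 hc').1
    rw [List.getElem?_map, List.getElem?_append_left hi, hc'] at h2
    simp at h2
    subst h2
    have := List.mem_of_getElem? h1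
    exact ih w this (hws w this) c'

theorem Mat.congr {σ τ : V → STerm F V} {w : Term F V} {t : STerm F V} (h : Mat ar σ w t)
    (he : ∀ x, 0 < w.count x → σ x = τ x) : Mat ar τ w t := by
  induction h with
  | var x => rw [he x ((Term.count_pos_var _ _).2 rfl)]; exact .var x
  | app f ws ts hl hle _ ih =>
    refine .app f ws ts hl hle ?_
    intro i w t h1 h2
    refine ih i w t h1 h2 ?_
    intro x hx
    exact he x ((Term.count_pos_app _ _ _).2 ⟨w, List.mem_of_getElem? h1, hx⟩)

theorem Mat.unique {σ τ : V → STerm F V} {w : Term F V} {t : STerm F V} (h : Mat ar σ w t)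
    (h' : Mat ar τ w t) : ∀ x, 0 < w.count x → σ x = τ x := by
  induction h with
  | var y =>
    intro x hx
    have := (Term.count_pos_var _ _).1 hx
    subst this
    generalize hs : σ y = s at h'
    cases h'
    rfl
  | app f ws ts hl hle _ ih =>
    intro x hx
    cases h' with
    | app _ _ _ _ _ h' =>
    obtain ⟨w, hw, hx⟩ := (Term.count_pos_app _ _ _).1 hx
    obtain ⟨i, hi, hw⟩ := List.getElem_of_mem hw
    have h1 : ws[i]? = some w := by simp [hi, hw]
    have h2 : ts[i]? = some (ts[i]'(by omega)) := by simp
    exact ih i w _ h1 h2 (h' i w _ h1 h2) x hx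

/-- Setup hypotheses actually used. -/
structure Setup (R : CTRS F V) (ar mOf : F → ℕ) (idx : CRule F V → ℕ) : Prop where
  wf : ∀ ρ ∈ R, ρ.lhs.WF ar ∧ ρ.rhs.WF ar ∧ ∀ c ∈ ρ.conds, c.1.WF ar ∧ c.2.WF ar
  nv : ∀ ρ ∈ R, ∃ (f : F) (ws : List (Term F V)), ρ.lhs = Term.app f ws
  idx : ∀ ρ ∈ R, ρ.conds ≠ [] →
     ∀ (f : F) (ws : List (Term F V)), ρ.lhs = Term.app f ws → 1 ≤ idx ρ ∧ idx ρ ≤ mOf f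
  nice : ∀ ρ ∈ R, NiceRule ρ

theorem WF.len {f : F} {ts : List (Term F V)} (h : (Term.app f ts).WF ar) :
    ts.length = ar f := by
  cases h; assumption

theorem WF.arg {f : F} {ts : List (Term F V)} (h : (Term.app f ts).WF ar) :
    ∀ t ∈ ts, t.WF ar := by
  cases h; assumption

theorem agree_append {α : Type} (n : ℕ) (as bs cs : List α) (h : as.length = n) :
    ∀ i < n, (as ++ bs)[i]? = (as ++ cs)[i]? := by
  intro i hi
  rw [List.getElem?_append_left (by omega), List.getElem?_append_left (by omega)]

theorem SRoot.class (hS : Setup R ar mOf idx) {t t' : STerm F V} (h : SRoot R ar mOf idx t t') :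
    (∃ u, t' = guardT u) ∨ ∃ f ts ts', t = .app (.orig f) ts ∧ t' = .app (.orig f) ts' ∧
      ts.length = ts'.length ∧ ∀ i < ar f, ts[i]? = ts'[i]? := by
  obtain ⟨r, hr, σ, rfl, rfl⟩ := h
  rcases hr with ⟨ρ, _, _, rfl⟩ | ⟨ρ, hρ, _, j, hj, rfl⟩ | rfl | ⟨f, i, _, rfl⟩
  · left; exact ⟨_, by simp [uncondSRRule, guardT]; rfl⟩
  · obtain ⟨f, ws, hl⟩ := hS.nv ρ hρ
    rw [condSR_lhs ρ f ws hl, condSR_rhs ρ f ws hl]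
    split
    · left; exact ⟨_, by simp [guardT]; rfl⟩
    · right
      refine ⟨f, _, _, Term.subst_app _ _ _, Term.subst_app _ _ _, by simp [slotL], ?_⟩
      intro i hi
      rw [List.map_append, List.map_append]
      apply agree_append (ar f) _ _ _ _ i hi
      have := (hS.wf ρ hρ).1
      rw [hl] at this
      simp [extTList_length, WF.len this]
  · left; exact ⟨_, by simp [auxGuard, guardT]; rfl⟩
  · left; exact ⟨_, by simp [auxShift, guardT]; rfl⟩

theorem getElem?_mid_ne {α : Type} (pre post : List α) (a b : α) (i : ℕ) (h : i ≠ pre.length) :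
    (pre ++ a :: post)[i]? = (pre ++ b :: post)[i]? := by
  rcases Nat.lt_or_ge i pre.length with h1 | h1
  · rw [List.getElem?_append_left h1, List.getElem?_append_left h1]
  · rw [List.getElem?_append_right h1, List.getElem?_append_right h1]
    obtain ⟨k, hk⟩ : ∃ k, i - pre.length = k + 1 := ⟨i - pre.length - 1, by omega⟩
    simp [hk]

/-- list back matching, given back matching of the affected argument -/
theorem backList {σ' : V → STerm F V} (ws : List (Term F V)) (pre post : List (STerm F V))
    (a a' : STerm F V)
    (hlin : ∀ x, (ws.map (Term.count x)).sum ≤ 1)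
    (hm : ∀ (i : ℕ) w t, ws[i]? = some w → (pre ++ a' :: post)[i]? = some t → Mat ar σ' w t)
    (P : STerm F V → STerm F V → Prop)
    (ih : ∀ w, ws[pre.length]? = some w → Mat ar σ' w a' → ∃ σ, Mat ar σ w a ∧
      (∀ x, σ x = σ' x ∨ P (σ x) (σ' x)) ∧ ∀ x, w.count x = 0 → σ x = σ' x) :
    ∃ σ, (∀ (i : ℕ) w t, ws[i]? = some w → (pre ++ a :: post)[i]? = some t → Mat ar σ w t) ∧
      (∀ x, σ x = σ' x ∨ P (σ x) (σ' x)) ∧ ∀ x, (ws.map (Term.count x)).sum = 0 → σ x = σ' x := by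
  rcases hw : ws[pre.length]? with _ | w
  · refine ⟨σ', ?_, fun _ => .inl rfl, fun _ _ => rfl⟩
    intro i w t h1 h2
    have : i ≠ pre.length := by rintro rfl; simp [hw] at h1
    rw [getElem?_mid_ne pre post a a' i this] at h2
    exact hm i w t h1 h2
  · obtain ⟨σ, h1, h2, h3⟩ := ih w hw (hm _ w a' hw (by simp))
    refine ⟨σ, ?_, h2, ?_⟩
    · intro i w2 t g1 g2
      by_cases hi : i = pre.length
      · subst hi
        rw [hw] at g1
        simp at g1 g2
        subst g1 g2
        exact h1
      · rw [getElem?_mid_ne pre post a a' i hi] at g2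
        refine (hm i w2 t g1 g2).congr ?_
        intro x hx
        symm
        apply h3
        have := Term.sum_pair (Term.count x) ws _ _ _ _ hi g1 hw
        have := hlin x
        omega
    · intro x hx
      apply h3
      have := (Term.sum_pos (Term.count x) ws).not.1 (by omega)
      push Not at this
      have := this w (List.mem_of_getElem? hw)
      omega

theorem backMat (hS : Setup R ar mOf idx) {σ' : V → STerm F V} {w : Term F V} {t t' : STerm F V}
    (hlin : ∀ x, w.count x ≤ 1)
    (hm : Mat ar σ' w t') (hst : CtxStep (SRoot R ar mOf idx) t t') :
    ∃ σ, Mat ar σ w t ∧ (∀ x, σ x = σ' x ∨ CtxStep (SRoot R ar mOf idx) (σ x) (σ' x)) ∧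
      ∀ x, w.count x = 0 → σ x = σ' x := by
  induction w using Term.ind generalizing t t' with
  | hv y =>
    refine ⟨Function.update σ' y t, ?_, ?_, ?_⟩
    · have := Mat.var (ar := ar) (σ := Function.update σ' y t) y
      simpa using this
    · intro x
      by_cases h : x = y
      · subst h
        generalize hs : σ' x = s
        cases hm
        subst hs
        right; simpa using hst
      · left; simp [h]
    · intro x hx
      have : ¬ y = x := fun h => by simp [h] at hx
      simp [Ne.symm this]
  | ha f ws ih =>
    cases hm with
    | app _ _ ts' hl hle hm =>
    generalize ht' : Term.app (SSym.orig f) ts' = t' at hst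
    cases hst with
    | root h =>
      subst ht'
      rcases h.class hS with ⟨u, hu⟩ | ⟨g, ts, ts'', rfl, h2, h3, h4⟩
      · simp [guardT] at hu
      · simp at h2
        obtain ⟨rfl, rfl⟩ := h2
        refine ⟨σ', .app _ _ _ hl (by omega) ?_, fun _ => .inl rfl, fun _ _ => rfl⟩
        intro i w t g1 g2
        have : i < ws.length := (List.getElem?_eq_some_iff.1 g1).1
        rw [h4 i (by omega)] at g2
        exact hm i w t g1 g2
    | @congr g pre post a a' h =>
      simp at ht'
      obtain ⟨rfl, rfl⟩ := ht'
      simp only [Term.count_app] at hlin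
      obtain ⟨σ, h1, h2, h3⟩ := backList ws pre post a a' hlin hm (CtxStep (SRoot R ar mOf idx)) (by
        intro w hw hmw
        refine ih w (List.mem_of_getElem? hw) ?_ hmw h
        intro x
        exact le_trans (List.single_le_sum (by simp) _
          (List.mem_map_of_mem (List.mem_of_getElem? hw))) (hlin x))
      exact ⟨σ, .app _ _ _ hl (by simpa using hle) h1, h2, by simpa using h3⟩

/-- Data of an active slot of a node. -/
structure SlotCond (R : CTRS F V) (ar : F → ℕ) (idx : CRule F V → ℕ) (f : F)
    (ts : List (STerm F V)) (ρ : CRule F V) (ws : List (Term F V)) (j : ℕ)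
    (e : STerm F V) (c : Term F V × Term F V) (σ : V → STerm F V) : Prop where
  mem : ρ ∈ R
  lhs : ρ.lhs = .app f ws
  cond : ρ.conds[j]? = some c
  content : ts[ar f + (idx ρ - 1)]? =
    some (.app (.tup ρ (j+1)) (e :: (Vlist ρ (j+1)).map σ))
  mat : ∀ (i : ℕ) w t, ws[i]? = some w → ts[i]? = some t → Mat ar σ w t

/-- `Just s t`: the term `s` justifies the state `t`. -/
inductive Just (R : CTRS F V) (ar : F → ℕ) (idx : CRule F V → ℕ) :
    Term F V → STerm F V → Prop where
  | var (s : Term F V) (x : V) : RedStar R s (.var x) → Just R ar idx s (.var (Sum.inl x))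
  | guard (s : Term F V) (t : STerm F V) : Just R ar idx s t →
      Just R ar idx s (.app .guard [t])
  | node (s : Term F V) (f : F) (ts : List (STerm F V)) (us : List (Term F V))
      (θ : CRule F V → List (Term F V) → ℕ → STerm F V → Term F V × Term F V →
        (V → STerm F V) → V → Term F V) :
      RedStar R s (.app f us) → us.length = ar f → ar f ≤ ts.length →
      (∀ (i : ℕ) u t, us[i]? = some u → ts[i]? = some t → Just R ar idx u t) →
      (∀ ρ ws j e c σ, SlotCond R ar idx f ts ρ ws j e c σ →
        RedStar R s (ρ.lhs.subst (θ ρ ws j e c σ)) ∧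
        ∀ (i : ℕ) d, i < j → ρ.conds[i]? = some d →
          RedStar R (d.1.subst (θ ρ ws j e c σ)) (d.2.subst (θ ρ ws j e c σ))) →
      (∀ ρ ws j e c σ, SlotCond R ar idx f ts ρ ws j e c σ →
        Just R ar idx (c.1.subst (θ ρ ws j e c σ)) e) →
      (∀ ρ ws j e c σ, SlotCond R ar idx f ts ρ ws j e c σ →
        ∀ x, 0 < seqCount x (ρ.lhs :: (ρ.conds.take j).map Prod.snd) →
          Just R ar idx (θ ρ ws j e c σ x) (σ x)) →
      Just R ar idx s (.app (.orig f) ts)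

theorem Just.mono {s s' : Term F V} {t : STerm F V} (h : Just R ar idx s' t)
    (hs : RedStar R s s') : Just R ar idx s t := by
  induction h with
  | var s' x h => exact .var _ _ (Relation.ReflTransGen.trans hs h)
  | guard s' t h ih => exact .guard _ _ (ih hs)
  | node s' f ts us θ h1 h2 h3 h4 h5 h6 h7 =>
    exact .node s f ts us θ (Relation.ReflTransGen.trans hs h1) h2 h3 h4
      (fun ρ ws j e c σ h => ⟨Relation.ReflTransGen.trans hs (h5 ρ ws j e c σ h).1,
        (h5 ρ ws j e c σ h).2⟩) h6 h7

/-- The existential information attached to a slot. -/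
def SlotInfo (R : CTRS F V) (ar : F → ℕ) (idx : CRule F V → ℕ) (s : Term F V)
    (ρ : CRule F V) (j : ℕ) (e : STerm F V) (c : Term F V × Term F V) (σ : V → STerm F V)
    (θ : V → Term F V) : Prop :=
  RedStar R s (ρ.lhs.subst θ) ∧
  (∀ (i : ℕ) d, i < j → ρ.conds[i]? = some d → RedStar R (d.1.subst θ) (d.2.subst θ)) ∧
  Just R ar idx (c.1.subst θ) e ∧
  ∀ x, 0 < seqCount x (ρ.lhs :: (ρ.conds.take j).map Prod.snd) → Just R ar idx (θ x) (σ x)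

theorem Just.node' {s : Term F V} {f : F} {ts : List (STerm F V)} (us : List (Term F V))
    (h1 : RedStar R s (.app f us)) (h2 : us.length = ar f) (h3 : ar f ≤ ts.length)
    (h4 : ∀ (i : ℕ) u t, us[i]? = some u → ts[i]? = some t → Just R ar idx u t)
    (h5 : ∀ ρ ws j e c σ, SlotCond R ar idx f ts ρ ws j e c σ →
      ∃ θ, SlotInfo R ar idx s ρ j e c σ θ) : Just R ar idx s (.app (.orig f) ts) := by
  have : Nonempty (V → Term F V) := ⟨Term.var⟩
  choose! θ hθ using h5
  refine .node s f ts us θ h1 h2 h3 h4 ?_ ?_ ?_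
  · intro ρ ws j e c σ h
    have := hθ ρ ws j e c σ h
    exact ⟨this.1, this.2.1⟩
  · intro ρ ws j e c σ h
    exact (hθ ρ ws j e c σ h).2.2.1
  · intro ρ ws j e c σ h
    exact (hθ ρ ws j e c σ h).2.2.2

theorem Just.inv {s : Term F V} {f : F} {ts : List (STerm F V)}
    (h : Just R ar idx s (.app (.orig f) ts)) :
    ∃ us, RedStar R s (.app f us) ∧ us.length = ar f ∧ ar f ≤ ts.length ∧
    (∀ (i : ℕ) u t, us[i]? = some u → ts[i]? = some t → Just R ar idx u t) ∧
    (∀ ρ ws j e c σ, SlotCond R ar idx f ts ρ ws j e c σ →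
      ∃ θ, SlotInfo R ar idx s ρ j e c σ θ) := by
  cases h with
  | node _ _ _ us θ h1 h2 h3 h4 h5 h6 h7 =>
  exact ⟨us, h1, h2, h3, h4, fun ρ ws j e c σ h => ⟨θ ρ ws j e c σ, (h5 _ _ _ _ _ _ h).1,
    (h5 _ _ _ _ _ _ h).2, h6 _ _ _ _ _ _ h, h7 _ _ _ _ _ _ h⟩⟩

theorem Just.guard_inv {s : Term F V} {t : STerm F V}
    (h : Just R ar idx s (guardT t)) : Just R ar idx s t := by
  cases h; assumption

end srbasic

set_option autoImplicit false
set_option linter.unusedSectionVars false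

section srsound
variable {F V : Type} [DecidableEq V] {R : CTRS F V} {ar mOf : F → ℕ} {idx : CRule F V → ℕ}

theorem mapM_attach_opt {α β : Type} (l : List α) (g : α → Option β) :
    l.attach.mapM (fun t => g t.1) = l.mapM g := by
  rw [List.mapM_subtype (g := g) (by intros; rfl)]
  simp

theorem mapM_opt {α β : Type} (l : List α) (g : α → Option β) (k : α → β)
    (h : ∀ a ∈ l, g a = some (k a)) : l.mapM g = some (l.map k) := by
  induction l with
  | nil => simp
  | cons a l ih =>
    rw [List.mapM_cons, h a (by simp), ih (fun b hb => h b (by simp [hb]))]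
    rfl

theorem hatT_orig (f : F) (ts : List (STerm F V)) :
    hatT ar (.app (.orig f) ts) = Option.map (Term.app f) ((ts.take (ar f)).mapM (hatT ar)) := by
  rw [hatT, mapM_attach_opt]

theorem Just.hat {s : Term F V} {t : STerm F V} (h : Just R ar idx s t) :
    ∃ u, hatT ar t = some u ∧ RedStar R s u := by
  induction h with
  | var s x h => exact ⟨_, by rw [hatT], h⟩
  | guard s t h ih =>
    obtain ⟨u, h1, h2⟩ := ih
    exact ⟨u, by rw [hatT, h1], h2⟩
  | node s f ts us θ h1 h2 h3 h4 h5 h6 h7 ih4 ih6 ih7 =>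
    let k : STerm F V → Term F V := fun t => (hatT ar t).getD (.app f [])
    have key : ∀ (i : ℕ) u t, us[i]? = some u → ts[i]? = some t →
        hatT ar t = some (k t) ∧ RedStar R u (k t) := by
      intro i u t g1 g2
      obtain ⟨v, q1, q2⟩ := ih4 i u t g1 g2
      have : k t = v := by simp [k, q1]
      rw [this]; exact ⟨q1, q2⟩
    refine ⟨.app f ((ts.take (ar f)).map k), ?_, ?_⟩
    · rw [hatT_orig, mapM_opt _ _ k]
      · rfl
      · intro t ht
        obtain ⟨i, hi, rfl⟩ := List.getElem_of_mem ht
        have hi' := hi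
        rw [List.length_take] at hi'
        refine (key i (us[i]'(by omega)) _ (by simp) ?_).1
        rw [List.getElem_take]
        simp
    · refine Relation.ReflTransGen.trans h1 (RedStar.congrIdx (by simp; omega) ?_)
      intro i u v g1 g2
      rw [List.getElem?_map, Option.map_eq_some_iff] at g2
      obtain ⟨t, g2, rfl⟩ := g2
      have : i < us.length := (List.getElem?_eq_some_iff.1 g1).1
      rw [List.getElem?_take_of_lt (by omega)] at g2
      exact (key i u t g1 g2).2

open Classical in
theorem Just.decomp {s : Term F V} {t : STerm F V} {σ : V → STerm F V} {w : Term F V}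
    (L : V → Prop) (hL : ∀ x, L x → w.count x ≤ 1)
    (h : Just R ar idx s t) (hm : Mat ar σ w t) :
    ∃ θ, RedStar R s (w.subst θ) ∧ ∀ x, 0 < w.count x →
      (L x → Just R ar idx (θ x) (σ x)) ∧ (¬ L x → hatT ar (σ x) = some (θ x)) := by
  induction w using Term.ind generalizing s t with
  | hv y =>
    have ht : t = σ y := by generalize hs : σ y = q; cases hm; exact hs
    subst ht
    by_cases hy : L y
    · refine ⟨fun _ => s, by rw [Term.subst_var]; exact .refl, ?_⟩
      intro x hx
      obtain rfl := (Term.count_pos_var _ _).1 hx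
      exact ⟨fun _ => h, fun h => absurd hy h⟩
    · obtain ⟨u, h1, h2⟩ := h.hat
      refine ⟨fun _ => u, by rw [Term.subst_var]; exact h2, ?_⟩
      intro x hx
      obtain rfl := (Term.count_pos_var _ _).1 hx
      exact ⟨fun h => absurd h hy, fun _ => h1⟩
  | ha f ws ih =>
    cases hm with
    | app _ _ ts hl hle hm =>
    obtain ⟨us, g1, g2, g3, g4, _⟩ := h.inv
    have key : ∀ (i : ℕ) w, ws[i]? = some w → ∃ θ, (∀ u, us[i]? = some u →
        RedStar R u (w.subst θ)) ∧ ∀ x, 0 < w.count x →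
      (L x → Just R ar idx (θ x) (σ x)) ∧ (¬ L x → hatT ar (σ x) = some (θ x)) := by
      intro i w hw
      have hi : i < ws.length := (List.getElem?_eq_some_iff.1 hw).1
      have h1 : us[i]? = some (us[i]'(by omega)) := by simp
      have h2 : ts[i]? = some (ts[i]'(by omega)) := by simp
      obtain ⟨θ, q1, q2⟩ := ih w (List.mem_of_getElem? hw) (fun x hx => le_trans
        (List.single_le_sum (by simp) _ (List.mem_map_of_mem (List.mem_of_getElem? hw)))
        (le_of_eq_of_le (Term.count_app x f ws).symm (hL x hx)))
        (g4 i _ _ h1 h2) (hm i w _ hw h2)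
      refine ⟨θ, ?_, q2⟩
      intro u hu
      rw [h1] at hu
      simp only [Option.some.injEq] at hu
      subst hu
      exact q1
    have : Nonempty (V → Term F V) := ⟨Term.var⟩
    choose! T hT1 hT2 using key
    let pos : V → ℕ × Term F V := fun x =>
      if h : ∃ p : ℕ × Term F V, ws[p.1]? = some p.2 ∧ 0 < p.2.count x then h.choose else (0, .var x)
    have hpos : ∀ x (i : ℕ) w, ws[i]? = some w → 0 < w.count x →
        ws[(pos x).1]? = some (pos x).2 ∧ 0 < (pos x).2.count x := by
      intro x i w h1 h2
      have hex : ∃ p : ℕ × Term F V, ws[p.1]? = some p.2 ∧ 0 < p.2.count x := ⟨(i, w), h1, h2⟩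
      have : pos x = hex.choose := by simp only [pos]; rw [dif_pos hex]
      rw [this]
      exact hex.choose_spec
    let θ : V → Term F V := fun x => T (pos x).1 (pos x).2 x
    have hθ : ∀ (i : ℕ) w, ws[i]? = some w → ∀ x, 0 < w.count x → θ x = T i w x := by
      intro i w h1 x h2
      obtain ⟨p1, p2⟩ := hpos x i w h1 h2
      by_cases hx : L x
      · have hi : (pos x).1 = i := by
          by_contra hne
          have := Term.sum_pair (Term.count x) ws _ _ _ _ hne p1 h1
          have h3 := hL x hx
          rw [Term.count_app] at h3
          omega
        have hw : (pos x).2 = w := by rw [hi, h1] at p1; simpa using p1.symm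
        simp only [θ, hi, hw]
      · have q1 := (hT2 _ _ p1 x p2).2 hx
        have q2 := (hT2 _ _ h1 x h2).2 hx
        rw [q1] at q2
        simpa [θ] using q2
    refine ⟨θ, ?_, ?_⟩
    · refine Relation.ReflTransGen.trans g1 ?_
      rw [Term.subst_app]
      refine RedStar.congrIdx (by simp; omega) ?_
      intro i u v h1 h2
      rw [List.getElem?_map, Option.map_eq_some_iff] at h2
      obtain ⟨w, h2, rfl⟩ := h2
      rw [Term.subst_congr θ (T i w) w (hθ i w h2)]
      exact hT1 i w h2 u h1
    · intro x hx
      obtain ⟨w, hw, hx⟩ := (Term.count_pos_app _ _ _).1 hx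
      obtain ⟨i, hi, hw⟩ := List.getElem_of_mem hw
      have h1 : ws[i]? = some w := by simp [hi, hw]
      rw [hθ i w h1 x hx]
      exact hT2 i w h1 x hx

/-- a node all of whose slots are `⊥` has no active slot -/
theorem SlotCond.bot {f : F} {as : List (STerm F V)} {m : ℕ} {ρ ws j e c σ}
    (h : SlotCond R ar idx f (as ++ List.replicate m botT) ρ ws j e c σ)
    (hl : as.length = ar f) : False := by
  have := h.content
  rw [List.getElem?_append_right (by omega), List.getElem?_replicate] at this
  split at this
  · simp [botT] at this
  · simp at this

theorem Just.comp {r : Term F V} (hr : r.WF ar) (θ : V → Term F V) (σ : WVar V → STerm F V)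
    (h : ∀ x, 0 < r.count x → Just R ar idx (θ x) (σ (Sum.inl x))) :
    Just R ar idx (r.subst θ) ((barT mOf r).subst σ) := by
  induction r using Term.ind with
  | hv x => simpa using h x ((Term.count_pos_var _ _).2 rfl)
  | ha f ts ih =>
    have hl := WF.len hr
    rw [barT_app, Term.subst_app, Term.subst_app, List.map_append, List.map_replicate]
    have hb : (botT : STerm F V).subst σ = botT := by simp [botT]
    rw [hb]
    refine Just.node' _ .refl (by simpa using hl) (by simp; omega) ?_ ?_
    · intro i u t h1 h2
      rw [List.getElem?_map, Option.map_eq_some_iff] at h1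
      obtain ⟨w, h1, rfl⟩ := h1
      have hi : i < ts.length := (List.getElem?_eq_some_iff.1 h1).1
      rw [List.getElem?_append_left (by simpa using hi)] at h2
      simp [h1] at h2
      subst h2
      have hw := List.mem_of_getElem? h1
      exact ih w hw (WF.arg hr w hw)
        (fun x hx => h x ((Term.count_pos_app _ _ _).2 ⟨w, hw, hx⟩))
    · intro ρ ws j e c σ' h
      exact (h.bot (by simpa using hl)).elim

theorem mem_Vlist (ρ : CRule F V) (j : ℕ) (x : V) :
    x ∈ Vlist ρ (j+1) ↔ 0 < seqCount x ((ρ.conds.take j).map Prod.snd) := by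
  unfold Vlist
  rw [List.mem_dedup, List.mem_flatMap, seqCount_pos]
  simp only [Term.mem_varList, Nat.add_sub_cancel]

theorem seqCount_take (x : V) (ρ : CRule F V) (j : ℕ)
    (h : 0 < seqCount x ((ρ.conds.take j).map Prod.snd)) :
    ∃ (i : ℕ) (c : Term F V × Term F V), i < j ∧ ρ.conds[i]? = some c ∧ 0 < c.2.count x := by
  obtain ⟨t, ht, hx⟩ := (seqCount_pos _ _).1 h
  obtain ⟨c, hc, rfl⟩ := List.mem_map.1 ht
  obtain ⟨i, hi, rfl⟩ := List.getElem_of_mem hc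
  rw [List.length_take] at hi
  exact ⟨i, _, by omega, by rw [List.getElem_take]; simp, hx⟩

theorem take_succ_snd (ρ : CRule F V) (j : ℕ) (c : Term F V × Term F V)
    (h : ρ.conds[j]? = some c) :
    (ρ.conds.take (j+1)).map Prod.snd = (ρ.conds.take j).map Prod.snd ++ [c.2] := by
  rw [List.take_add_one, h]; simp

theorem Vlist_disj {ρ : CRule F V} (hN : NiceRule ρ) (j : ℕ) (x : V) (h : x ∈ Vlist ρ (j+1)) :
    ρ.lhs.count x = 0 := by
  obtain ⟨i, c, _, h2, h3⟩ := seqCount_take x ρ j ((mem_Vlist ρ j x).1 h)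
  have := hN.disj i c h2 x h3
  simp at this
  exact this.1

theorem slotL_get (m i c0 : ℕ) (mid : STerm F V) (h1 : 1 ≤ i) (h2 : i ≤ m) :
    (slotL m i c0 mid)[i - 1]? = some mid := by
  unfold slotL
  rw [List.getElem?_map, List.getElem?_range (by omega)]
  simp

theorem slotL_get_ne (m i c0 q : ℕ) (mid mid' : STerm F V) (h : q ≠ i - 1) :
    (slotL m i c0 mid)[q]? = (slotL m i c0 mid')[q]? := by
  unfold slotL
  rw [List.getElem?_map, List.getElem?_map]
  rcases Nat.lt_or_ge q m with h1 | h1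
  · rw [List.getElem?_range h1]; simp [h]
  · rw [List.getElem?_eq_none (by simpa using h1)]; rfl

/-- Shape of a node with substituted rule pattern. -/
def nodeArgs (mOf : F → ℕ) (idx : CRule F V → ℕ) (ρ : CRule F V) (f : F)
    (ws : List (Term F V)) (σ : WVar V → STerm F V) (mid : STerm F V) : List (STerm F V) :=
  ((extTList mOf ws 0).1 ++ slotL (mOf f) (idx ρ) (extTList mOf ws 0).2 mid).map (Term.subst σ)

theorem nodeArgs_mid {ρ : CRule F V} {f : F} {ws : List (Term F V)} {σ : WVar V → STerm F V}
    (hl : ws.length = ar f) (h1 : 1 ≤ idx ρ) (h2 : idx ρ ≤ mOf f) (mid : STerm F V) :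
    (nodeArgs mOf idx ρ f ws σ mid)[ar f + (idx ρ - 1)]? = some (mid.subst σ) := by
  unfold nodeArgs
  rw [List.getElem?_map, List.getElem?_append_right (by rw [extTList_length]; omega),
    extTList_length, hl, Nat.add_sub_cancel_left, slotL_get _ _ _ _ h1 h2]
  rfl

theorem nodeArgs_ne {ρ : CRule F V} {f : F} {ws : List (Term F V)} {σ : WVar V → STerm F V}
    (hl : ws.length = ar f) (mid mid' : STerm F V) (q : ℕ) (hq : q ≠ ar f + (idx ρ - 1)) :
    (nodeArgs mOf idx ρ f ws σ mid)[q]? = (nodeArgs mOf idx ρ f ws σ mid')[q]? := by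
  unfold nodeArgs
  rw [List.getElem?_map, List.getElem?_map]
  congr 1
  rcases Nat.lt_or_ge q (ar f) with h | h
  · rw [List.getElem?_append_left (by rw [extTList_length]; omega),
      List.getElem?_append_left (by rw [extTList_length]; omega)]
  · rw [List.getElem?_append_right (by rw [extTList_length]; omega),
      List.getElem?_append_right (by rw [extTList_length]; omega)]
    apply slotL_get_ne
    rw [extTList_length]; omega

theorem nodeArgs_length {ρ : CRule F V} {f : F} {ws : List (Term F V)} {σ : WVar V → STerm F V}
    (mid : STerm F V) : (nodeArgs mOf idx ρ f ws σ mid).length = ws.length + mOf f := by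
  simp [nodeArgs, extTList_length, slotL]

theorem nodeArgs_mat {ρ : CRule F V} {f : F} {ws : List (Term F V)} {σ : WVar V → STerm F V}
    (hw : ∀ w ∈ ws, w.WF ar) (mid : STerm F V) :
    ∀ (i : ℕ) w t, ws[i]? = some w → (nodeArgs mOf idx ρ f ws σ mid)[i]? = some t →
      Mat ar (fun x => σ (Sum.inl x)) w t := by
  intro i w t h1 h2
  have hi : i < ws.length := (List.getElem?_eq_some_iff.1 h1).1
  unfold nodeArgs at h2
  rw [List.getElem?_map, List.getElem?_append_left (by rw [extTList_length]; omega)] at h2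
  obtain ⟨c', hc'⟩ := extTList_get mOf ws 0 i w h1
  rw [hc'] at h2
  simp at h2
  subst h2
  exact Mat.ext σ w (hw w (List.mem_of_getElem? h1)) c'

/-- the term in the slot before the application of the `j`-th rule -/
def midL (mOf : F → ℕ) (ρ : CRule F V) (ws : List (Term F V)) (f : F) (j : ℕ) : STerm F V :=
  if j = 0 then botT else tupT ρ j (extT mOf (ρ.conds.getD (j - 1) (dummyCond ρ)).2
          ((extTList mOf ws 0).2 + mOf f)).1

theorem tupT_subst (ρ : CRule F V) (j : ℕ) (e : STerm F V) (σ : WVar V → STerm F V) :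
    (tupT ρ j e).subst σ = .app (.tup ρ j)
      (guardT (e.subst σ) :: (Vlist ρ j).map (fun x => σ (Sum.inl x))) := by
  simp [tupT, guardT, Function.comp_def]

open Classical in
theorem Just.core (hS : Setup R ar mOf idx) {s : Term F V} {ρ : CRule F V} (hρ : ρ ∈ R)
    {f : F} {ws : List (Term F V)} (hl : ρ.lhs = .app f ws) {σ : WVar V → STerm F V} {j : ℕ}
    (hj : j ≤ ρ.conds.length) (hc : ρ.conds ≠ [])
    (h : Just R ar idx s (.app (.orig f) (nodeArgs mOf idx ρ f ws σ (midL mOf ρ ws f j)))) :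
    ∃ θ, RedStar R s (ρ.lhs.subst θ) ∧
      (∀ (i : ℕ) d, i < j → ρ.conds[i]? = some d → RedStar R (d.1.subst θ) (d.2.subst θ)) ∧
      ∀ x, 0 < seqCount x (ρ.lhs :: (ρ.conds.take j).map Prod.snd) →
        (j < ρ.conds.length ∨ 0 < ρ.rhs.count x) →
        Just R ar idx (θ x) (σ (Sum.inl x)) := by
  have hwf := (hS.wf ρ hρ).1
  rw [hl] at hwf
  have hlen := WF.len hwf
  have hN := hS.nice ρ hρ
  obtain ⟨i1, i2⟩ := hS.idx ρ hρ hc f ws hl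
  rcases j with _ | j
  · have hm : Mat ar (fun x => σ (Sum.inl x)) ρ.lhs
        (.app (.orig f) (nodeArgs mOf idx ρ f ws σ (midL mOf ρ ws f 0))) := by
      rw [hl]
      exact .app _ _ _ hlen (by rw [nodeArgs_length]; omega) (nodeArgs_mat (WF.arg hwf) _)
    obtain ⟨θ, h1, h2⟩ := h.decomp (fun _ => True) (fun x _ => hN.linL hc x) hm
    refine ⟨θ, h1, by omega, ?_⟩
    intro x hx _
    simp at hx
    exact (h2 x hx).1 trivial
  · obtain ⟨us, _, _, _, _, h5⟩ := h.inv
    have hjl : j < ρ.conds.length := by omega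
    have hcj : ρ.conds[j]? = some (ρ.conds[j]) := by simp
    have hmid : midL mOf ρ ws f (j+1) = tupT ρ (j+1) (extT mOf (ρ.conds[j]).2
          ((extTList mOf ws 0).2 + mOf f)).1 := by
      simp [midL, hjl]
    obtain ⟨θ, t1, t2, t3, t4⟩ := h5 ρ ws j _ (ρ.conds[j]) (fun x => σ (Sum.inl x))
      ⟨hρ, hl, hcj, by rw [nodeArgs_mid hlen i1 i2, hmid, tupT_subst],
        nodeArgs_mat (WF.arg hwf) _⟩
    have hwc := ((hS.wf ρ hρ).2.2 _ (List.getElem_mem hjl)).2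
    obtain ⟨θ', q1, q2⟩ := t3.guard_inv.decomp
      (fun x => j + 1 < ρ.conds.length ∨ 0 < ρ.rhs.count x)
      (fun x hx => hx.elim (fun h => hN.lin j _ hcj h x) (fun h => hN.linR j _ hcj x h))
      (Mat.ext σ _ hwc _)
    let τ : V → Term F V := fun x => if 0 < (ρ.conds[j]).2.count x then θ' x else θ x
    have hτ : ∀ x, 0 < seqCount x (ρ.lhs :: (ρ.conds.take j).map Prod.snd) → τ x = θ x := by
      intro x hx
      have : ¬ 0 < (ρ.conds[j]).2.count x := by
        intro h
        have := hN.disj j _ hcj x h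
        omega
      simp only [τ]
      rw [if_neg this]
    have hτ' : ∀ x, 0 < (ρ.conds[j]).2.count x → τ x = θ' x := by
      intro x hx
      simp only [τ]
      rw [if_pos hx]
    have hsrc : ∀ (i : ℕ) d, i ≤ j → ρ.conds[i]? = some d → d.1.subst τ = d.1.subst θ := by
      intro i d hi hd
      apply Term.subst_congr
      intro x hx
      apply hτ
      have := hN.det i d hd x hx
      rw [seqCount_pos] at this ⊢
      obtain ⟨t, ht, hx⟩ := this
      refine ⟨t, ?_, hx⟩
      rcases List.mem_cons.1 ht with rfl | ht
      · simp
      · refine List.mem_cons_of_mem _ ?_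
        obtain ⟨c, hc, rfl⟩ := List.mem_map.1 ht
        exact List.mem_map_of_mem ((List.take_subset_take_left _ hi) hc)
    refine ⟨τ, ?_, ?_, ?_⟩
    · rw [Term.subst_congr τ θ]
      · exact t1
      · intro x hx; apply hτ; simp; omega
    · intro i d hi hd
      rw [hsrc i d (by omega) hd]
      rcases Nat.lt_or_ge i j with hij | hij
      · rw [Term.subst_congr τ θ d.2]
        · exact t2 i d hij hd
        · intro x hx
          apply hτ
          rw [seqCount_pos]
          refine ⟨d.2, List.mem_cons_of_mem _ (List.mem_map_of_mem ?_), hx⟩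
          rw [List.mem_iff_getElem?]
          exact ⟨i, by rw [List.getElem?_take_of_lt hij, hd]⟩
      · obtain rfl : i = j := by omega
        rw [hcj] at hd
        simp only [Option.some.injEq] at hd
        subst hd
        rw [Term.subst_congr τ θ' _ hτ']
        exact q1
    · intro x hx hx'
      rw [take_succ_snd ρ j _ hcj, ← List.cons_append, seqCount_append] at hx
      by_cases hxc : 0 < (ρ.conds[j]).2.count x
      · rw [hτ' x hxc]
        exact (q2 x hxc).1 hx'
      · have : 0 < seqCount x (ρ.lhs :: (ρ.conds.take j).map Prod.snd) := by
          simp at hx ⊢; omega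
        rw [hτ x this]
        exact t4 x this

end srsound

set_option autoImplicit false
set_option linter.unusedSectionVars false

section srstep
variable {F V : Type} [DecidableEq V] {R : CTRS F V} {ar mOf : F → ℕ} {idx : CRule F V → ℕ}

theorem Just.root (hS : Setup R ar mOf idx) {s : Term F V} {t t' : STerm F V}
    (h : Just R ar idx s t) (hst : SRoot R ar mOf idx t t') : Just R ar idx s t' := by
  obtain ⟨r, hr, σ, rfl, rfl⟩ := hst
  rcases hr with ⟨ρ, hρ, hc, rfl⟩ | ⟨ρ, hρ, hc, j, hj, rfl⟩ | rfl | ⟨f, i, hi, rfl⟩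
  · simp only [uncondSRRule] at h ⊢
    have hN := hS.nice ρ hρ
    obtain ⟨θ, h1, h2⟩ := h.decomp (fun x => ρ.lhs.count x = 1) (fun x hx => le_of_eq hx)
      (Mat.ext σ _ (hS.wf ρ hρ).1 0)
    have hfire : Red R (ρ.lhs.subst θ) (ρ.rhs.subst θ) := Red.fire hρ θ (by simp [hc])
    have := Just.comp (R := R) (idx := idx) (mOf := mOf) (hS.wf ρ hρ).2.1 θ σ (by
      intro x hx
      have := hN.unc hc x hx
      exact (h2 x (by omega)).1 this)
    have g := this.mono (h1.tail hfire)
    simp only [guardT, Term.subst_app, List.map_cons, List.map_nil]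
    exact .guard _ _ g
  · obtain ⟨f, ws, hl⟩ := hS.nv ρ hρ
    rw [condSR_lhs ρ f ws hl, Term.subst_app] at h
    change Just R ar idx s (.app (.orig f) (nodeArgs mOf idx ρ f ws σ (midL mOf ρ ws f j))) at h
    obtain ⟨θ, t1, t2, t3⟩ := h.core hS hρ hl hj hc
    have hN := hS.nice ρ hρ
    rw [condSR_rhs ρ f ws hl]
    split
    · rename_i hjk
      have hfire : Red R (ρ.lhs.subst θ) (ρ.rhs.subst θ) := by
        refine Red.fire hρ θ ?_
        intro c hc
        obtain ⟨i, hi, hw⟩ := List.getElem_of_mem hc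
        exact t2 i c (by omega) (by simp [hi, hw])
      have := Just.comp (R := R) (idx := idx) (mOf := mOf) (hS.wf ρ hρ).2.1 θ σ (by
        intro x hx
        refine t3 x ?_ (.inr hx)
        rw [hjk, List.take_length]
        exact hN.rhsv hc x hx)
      have g := this.mono (t1.tail hfire)
      simp only [guardT, Term.subst_app, List.map_cons, List.map_nil]
      exact .guard _ _ g
    · rename_i hjk
      have hjl : j < ρ.conds.length := by omega
      have hcj : ρ.conds[j]? = some (ρ.conds[j]) := by simp
      have hD : ρ.conds.getD j (dummyCond ρ) = ρ.conds[j] := by simp [hjl]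
      rw [hD, Term.subst_app]
      set mid' := tupT ρ (j+1) (barT mOf (ρ.conds[j]).1) with hmid'
      change Just R ar idx s (.app (.orig f) (nodeArgs mOf idx ρ f ws σ mid'))
      have hwf := (hS.wf ρ hρ).1
      rw [hl] at hwf
      have hlen := WF.len hwf
      obtain ⟨i1, i2⟩ := hS.idx ρ hρ hc f ws hl
      obtain ⟨us, g1, g2, g3, g4, g5⟩ := h.inv
      refine Just.node' us g1 g2 (by rw [nodeArgs_length]; omega) ?_ ?_
      · intro i u t h1 h2
        have : i < us.length := (List.getElem?_eq_some_iff.1 h1).1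
        rw [nodeArgs_ne hlen _ (midL mOf ρ ws f j) i (by omega)] at h2
        exact g4 i u t h1 h2
      · intro ρ2 ws2 j2 e2 c2 σ2 hs
        obtain ⟨m1, m2, m3, m4, m5⟩ := hs
        by_cases hq : ar f + (idx ρ2 - 1) = ar f + (idx ρ - 1)
        · rw [hq, nodeArgs_mid hlen i1 i2, hmid', tupT_subst] at m4
          simp only [Option.some.injEq, Term.app.injEq, SSym.tup.injEq, List.cons.injEq,
            Nat.add_right_cancel_iff] at m4
          obtain ⟨⟨rfl, rfl⟩, rfl, m4⟩ := m4
          rw [hl] at m2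
          simp only [Term.app.injEq, true_and] at m2
          subst m2
          rw [hcj] at m3
          simp only [Option.some.injEq] at m3
          subst m3
          have hag : ∀ x, 0 < seqCount x (ρ.lhs :: (ρ.conds.take j).map Prod.snd) →
              σ2 x = σ (Sum.inl x) := by
            intro x hx
            rw [seqCount_cons] at hx
            rcases Nat.eq_zero_or_pos (ρ.lhs.count x) with h0 | h0
            · have : x ∈ Vlist ρ (j+1) := (mem_Vlist ρ j x).2 (by omega)
              exact (List.map_inj_left.1 m4 x this).symm
            · rw [hl] at h0
              have M1 : Mat ar σ2 (.app f ws) (.app (.orig f) (nodeArgs mOf idx ρ f ws σ mid')) :=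
                .app _ _ _ hlen (by rw [nodeArgs_length]; omega) m5
              have M2 : Mat ar (fun x => σ (Sum.inl x)) (.app f ws)
                  (.app (.orig f) (nodeArgs mOf idx ρ f ws σ mid')) :=
                .app _ _ _ hlen (by rw [nodeArgs_length]; omega) (nodeArgs_mat (WF.arg hwf) _)
              exact M1.unique M2 x h0
          refine ⟨θ, t1, t2, ?_, ?_⟩
          · refine .guard _ _ (Just.comp ?_ θ σ ?_)
            · exact ((hS.wf ρ hρ).2.2 _ (List.getElem_mem hjl)).1
            · intro x hx
              exact t3 x (hN.det j _ hcj x hx) (.inl hjl)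
          · intro x hx
            rw [hag x hx]
            exact t3 x hx (.inl hjl)
        · refine g5 ρ2 ws2 j2 e2 c2 σ2 ⟨m1, m2, m3, ?_, ?_⟩
          · rw [nodeArgs_ne hlen _ mid' _ hq]; exact m4
          · intro i w t h1 h2
            have hwf2 := (hS.wf ρ2 m1).1
            rw [m2] at hwf2
            have : i < ws2.length := (List.getElem?_eq_some_iff.1 h1).1
            have := WF.len hwf2
            rw [nodeArgs_ne hlen _ mid' i (by omega)] at h2
            exact m5 i w t h1 h2
  · simp only [auxGuard, guardT, Term.subst_app, List.map_cons, List.map_nil,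
      Term.subst_var] at h ⊢
    exact h.guard_inv
  · simp only [auxShift, guardT, Term.subst_app, List.map_cons, List.map_nil] at h ⊢
    refine .guard _ _ ?_
    obtain ⟨us, g1, g2, g3, g4, _⟩ := h.inv
    rw [List.map_append, List.map_replicate]
    have hb : (botT : STerm F V).subst σ = botT := by simp [botT]
    rw [hb]
    refine Just.node' us g1 g2 (by simp) ?_ ?_
    · intro q u t h1 h2
      have hq : q < ar f := by
        have : q < us.length := (List.getElem?_eq_some_iff.1 h1).1
        omega
      rw [List.getElem?_append_left (by simpa using hq)] at h2
      simp [hq] at h2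
      subst h2
      by_cases hqi : q = i
      · refine Just.guard_inv (g4 q u _ h1 ?_)
        rw [List.map_append, List.getElem?_append_left (by simpa using hq)]
        simp [hq, hqi, guardT, hi]
      · refine g4 q u _ h1 ?_
        rw [List.map_append, List.getElem?_append_left (by simpa using hq)]
        simp [hq, hqi]
    · intro ρ ws j e c σ' h
      exact (h.bot (by simp)).elim

theorem SRoot.not_var {x : WVar V} {t : STerm F V} (hS : Setup R ar mOf idx)
    (h : SRoot R ar mOf idx (.var x) t) : False := by
  obtain ⟨r, hr, σ, h1, _⟩ := h
  rcases hr with ⟨ρ, hρ, _, rfl⟩ | ⟨ρ, hρ, _, j, hj, rfl⟩ | rfl | ⟨f, i, _, rfl⟩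
  · obtain ⟨f, ws, hl⟩ := hS.nv ρ hρ
    simp [uncondSRRule, hl, extT_app] at h1
  · obtain ⟨f, ws, hl⟩ := hS.nv ρ hρ
    rw [condSR_lhs ρ f ws hl] at h1
    simp at h1
  · simp [auxGuard, guardT] at h1
  · simp [auxShift] at h1

theorem SRoot.of_guard {u t : STerm F V} (hS : Setup R ar mOf idx)
    (h : SRoot R ar mOf idx (.app .guard [u]) t) : t = u := by
  obtain ⟨r, hr, σ, h1, rfl⟩ := h
  rcases hr with ⟨ρ, hρ, _, rfl⟩ | ⟨ρ, hρ, _, j, hj, rfl⟩ | rfl | ⟨f, i, _, rfl⟩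
  · obtain ⟨f, ws, hl⟩ := hS.nv ρ hρ
    simp [uncondSRRule, hl, extT_app] at h1
  · obtain ⟨f, ws, hl⟩ := hS.nv ρ hρ
    rw [condSR_lhs ρ f ws hl] at h1
    simp at h1
  · simp [auxGuard, guardT] at h1 ⊢
    exact h1.symm
  · simp [auxShift] at h1

theorem step_tup {a : STerm F V} {ρ : CRule F V} {j : ℕ} {as : List (STerm F V)}
    (hS : Setup R ar mOf idx)
    (h : CtxStep (SRoot R ar mOf idx) a (.app (.tup ρ j) as)) :
    ∃ pre post b b', as = pre ++ b' :: post ∧ a = .app (.tup ρ j) (pre ++ b :: post) ∧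
      CtxStep (SRoot R ar mOf idx) b b' := by
  generalize hq : (Term.app (SSym.tup ρ j) as : STerm F V) = q at h
  cases h with
  | root h =>
    subst hq
    rcases h.class hS with ⟨u, hu⟩ | ⟨g, ts, ts'', rfl, h2, h3, h4⟩
    · simp [guardT] at hu
    · simp at h2
  | congr h =>
    simp only [Term.app.injEq] at hq
    obtain ⟨rfl, rfl⟩ := hq
    exact ⟨_, _, _, _, rfl, rfl, h⟩

theorem Just.step (hS : Setup R ar mOf idx) {s : Term F V} {t t' : STerm F V}
    (h : Just R ar idx s t) (hst : CtxStep (SRoot R ar mOf idx) t t') : Just R ar idx s t' := by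
  induction h generalizing t' with
  | var s x h =>
    cases hst with
    | root h => exact (h.not_var hS).elim
  | guard s t h ih =>
    generalize hq : (Term.app SSym.guard [t] : STerm F V) = q at hst
    cases hst with
    | root hr =>
      subst hq
      rw [hr.of_guard hS]; exact h
    | @congr g pre post a a' hr =>
      simp only [Term.app.injEq] at hq
      obtain ⟨rfl, hq⟩ := hq
      rcases pre with _ | ⟨p, pre⟩
      · simp at hq
        obtain ⟨rfl, rfl⟩ := hq
        exact .guard _ _ (ih hr)
      · simp at hq
  | node s f ts us θ h1 h2 h3 h4 h5 h6 h7 ih4 ih6 ih7 =>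
    have hJ : Just R ar idx s (.app (.orig f) ts) := .node s f ts us θ h1 h2 h3 h4 h5 h6 h7
    generalize hq : (Term.app (SSym.orig f) ts : STerm F V) = q at hst
    cases hst with
    | root hr => subst hq; exact hJ.root hS hr
    | @congr g pre post a a' hr =>
    simp only [Term.app.injEq] at hq
    obtain ⟨rfl, rfl⟩ := hq
    refine Just.node' us h1 h2 (by simpa using h3) ?_ ?_
    · intro i u t g1 g2
      by_cases hi : i = pre.length
      · subst hi
        simp at g2
        subst g2
        exact ih4 _ u a g1 (by simp) hr
      · rw [getElem?_mid_ne pre post a' a i hi] at g2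
        exact h4 i u t g1 g2
    · intro ρ ws j e c σ' hs
      obtain ⟨m1, m2, m3, m4, m5⟩ := hs
      have hc : ρ.conds ≠ [] := by intro h; simp [h] at m3
      have hN := hS.nice ρ m1
      have hwf := (hS.wf ρ m1).1
      rw [m2] at hwf
      have hlen := WF.len hwf
      -- transfer of the information for a substitution related by steps
      have trans : ∀ σ, SlotCond R ar idx f (pre ++ a :: post) ρ ws j e c σ →
          (∀ x, σ x = σ' x ∨ CtxStep (SRoot R ar mOf idx) (σ x) (σ' x)) →
          ∃ θ, SlotInfo R ar idx s ρ j e c σ' θ := by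
        intro σ hs hx
        refine ⟨θ ρ ws j e c σ, (h5 _ _ _ _ _ _ hs).1, (h5 _ _ _ _ _ _ hs).2,
          h6 _ _ _ _ _ _ hs, ?_⟩
        intro x hx'
        rcases hx x with he | he
        · rw [← he]; exact h7 _ _ _ _ _ _ hs x hx'
        · exact ih7 _ _ _ _ _ _ hs x hx' he
      by_cases hp : pre.length < ar f
      · have hlin : ∀ x, (ws.map (Term.count x)).sum ≤ 1 := by
          intro x
          have := hN.linL hc x
          rwa [m2, Term.count_app] at this
        obtain ⟨σ, b1, b2, b3⟩ := backList ws pre post a a' hlin m5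
          (CtxStep (SRoot R ar mOf idx)) (by
            intro w hw hmw
            refine backMat hS ?_ hmw hr
            intro x
            exact le_trans (List.single_le_sum (by simp) _
              (List.mem_map_of_mem (List.mem_of_getElem? hw))) (hlin x))
        refine trans σ ⟨m1, m2, m3, ?_, b1⟩ b2
        rw [getElem?_mid_ne pre post a a' _ (by omega), m4]
        congr 3
        apply List.map_congr_left
        intro x hx
        have := Vlist_disj hN j x hx
        rw [m2, Term.count_app] at this
        exact (b3 x this).symm
      · have hmain : ∀ (i : ℕ) w t, ws[i]? = some w → (pre ++ a :: post)[i]? = some t →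
            Mat ar σ' w t := by
          intro i w t g1 g2
          have : i < ws.length := (List.getElem?_eq_some_iff.1 g1).1
          rw [getElem?_mid_ne pre post a a' i (by omega)] at g2
          exact m5 i w t g1 g2
        by_cases hi : ar f + (idx ρ - 1) = pre.length
        · rw [hi] at m4
          simp only [List.getElem?_append_right (le_refl _), Nat.sub_self,
            List.getElem?_cons_zero, Option.some.injEq] at m4
          subst m4
          obtain ⟨pre2, post2, b, b', q1, rfl, q3⟩ := step_tup hS hr
          rcases pre2 with _ | ⟨p, pre2⟩
          · simp only [List.nil_append, List.cons.injEq] at q1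
            obtain ⟨rfl, rfl⟩ := q1
            have hs : SlotCond R ar idx f (pre ++ Term.app (SSym.tup ρ (j + 1))
                ([] ++ b :: List.map σ' (Vlist ρ (j + 1))) :: post) ρ ws j b c σ' :=
              ⟨m1, m2, m3, by simp [hi], hmain⟩
            refine ⟨θ ρ ws j b c σ', (h5 _ _ _ _ _ _ hs).1, (h5 _ _ _ _ _ _ hs).2, ?_, ?_⟩
            · exact ih6 _ _ _ _ _ _ hs q3
            · exact h7 _ _ _ _ _ _ hs
          · simp only [List.cons_append, List.cons.injEq] at q1
            obtain ⟨rfl, q1⟩ := q1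
            obtain ⟨v1, v2, hv, hv1, hv2⟩ := List.map_eq_append_iff.1 q1
            obtain ⟨y, v3, rfl, hy, hv3⟩ := List.map_eq_cons_iff.1 hv2
            have hnd : (Vlist ρ (j+1)).Nodup := List.nodup_dedup _
            rw [hv] at hnd
            have hyV : y ∈ Vlist ρ (j+1) := by rw [hv]; simp
            have hne : ∀ z, z ∈ v1 ∨ z ∈ v3 → z ≠ y := by
              rintro z hz rfl
              rw [List.nodup_append] at hnd
              obtain ⟨_, n2, n3⟩ := hnd
              rcases hz with hz | hz
              · exact n3 z hz z (by simp) rfl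
              · exact (List.nodup_cons.1 n2).1 hz
            refine trans (Function.update σ' y b) ⟨m1, m2, m3, ?_, ?_⟩ ?_
            · rw [hi]
              simp only [List.getElem?_append_right (le_refl _), Nat.sub_self,
                List.getElem?_cons_zero, Option.some.injEq, Term.app.injEq, true_and,
                List.cons_append, List.cons.injEq]
              rw [hv, List.map_append, List.map_cons, ← hv1, ← hv3]
              simp only [Function.update_self]
              congr 1
              · apply List.map_congr_left
                intro z hz; rw [Function.update_of_ne (hne z (.inl hz))]
              · congr 1
                apply List.map_congr_left
                intro z hz; rw [Function.update_of_ne (hne z (.inr hz))]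
            · intro i w t g1 g2
              refine (hmain i w t g1 g2).congr ?_
              intro x hx
              have h0 := Vlist_disj hN j y hyV
              rw [Function.update_of_ne]
              rintro rfl
              rw [m2] at h0
              have : 0 < (Term.app f ws).count x :=
                (Term.count_pos_app _ _ _).2 ⟨w, List.mem_of_getElem? g1, hx⟩
              omega
            · intro x
              by_cases hx : x = y
              · subst hx; right; simpa [hy] using q3
              · left; rw [Function.update_of_ne hx]
        · refine trans σ' ⟨m1, m2, m3, ?_, hmain⟩ (fun _ => .inl rfl)
          rw [getElem?_mid_ne pre post a a' _ hi, m4]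

theorem SR_sound (hS : Setup R ar mOf idx) {s u : Term F V} {t : STerm F V} (hs : s.WF ar)
    (h : RedStar (SRSys R ar mOf idx) (guardT (barT mOf s)) t) (hu : hatT ar t = some u) :
    RedStar R s u := by
  have h0 : Just R ar idx s (guardT (barT mOf s)) := by
    refine .guard _ _ ?_
    have := Just.comp (R := R) (idx := idx) (mOf := mOf) hs Term.var Term.var
      (fun x _ => .var _ _ .refl)
    rwa [Term.subst_id, Term.subst_id] at this
  have h1 : Just R ar idx s t := by
    clear hu
    induction h with
    | refl => exact h0
    | tail _ h2 ih => exact ih.step hS (Red_SR.1 h2)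
  obtain ⟨v, hv, h2⟩ := h1.hat
  rw [hu] at hv
  simp at hv
  subst hv
  exact h2

end srstep

set_option autoImplicit false
set_option linter.unusedSectionVars false

section tpart
variable {F V : Type} [DecidableEq V]

/-- Data of the conditional case of the `T` transformation. -/
structure TData (ρ : CRule F V) (xs : List V) (σ : V → V) (l' : Term (F ⊕ ℕ) V)
    (ts' : List (Term (F ⊕ ℕ) V)) : Prop where
  ne : ρ.conds ≠ []
  fresh : ∀ x ∈ xs, ¬ OccursInRule ρ x
  fix : ∀ x : V, x ∉ xs → σ x = x
  len : ts'.length = ρ.conds.length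
  lhs : l'.rename σ = ρ.lhs.mapF Sum.inl
  ts : ∀ (i : ℕ) c t, ρ.conds[i]? = some c → ts'[i]? = some t →
    t.rename σ = c.2.mapF Sum.inl
  one : ∀ x ∈ xs, seqCount x (l' :: ts') = 1
  other : ∀ x : V, x ∉ xs → seqCount x (l' :: ts') =
          if seqCount x ρ.pats ≤ 1 then seqCount x ρ.pats else 0

/-- The transformed rule. -/
def TRule (ρ : CRule F V) (xs : List V) (σ : V → V) (l' : Term (F ⊕ ℕ) V)
    (ts' : List (Term (F ⊕ ℕ) V)) : CRule (F ⊕ ℕ) V :=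
  ⟨l', ρ.rhs.mapF Sum.inl,
            (List.zip (ρ.conds.map (fun c => c.1.mapF Sum.inl)) ts') ++
              [(.app (Sum.inr xs.length) (xs.map Term.var),
                .app (Sum.inr xs.length) (xs.map (fun x => Term.var (σ x))))]⟩

theorem liftT_pats (ρ : CRule F V) : ρ.liftT.pats = ρ.pats.map (Term.mapF Sum.inl) := by
  simp [CRule.liftT, CRule.pats]

theorem IsTRule.data {ρ : CRule F V} {ρ' : CRule (F ⊕ ℕ) V} (h : IsTRule ρ ρ') :
    (ρ.conds = [] ∧ ρ' = ρ.liftT) ∨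
    ∃ xs σ l' ts', TData ρ xs σ l' ts' ∧ ρ' = TRule ρ xs σ l' ts' := by
  rcases h with h | ⟨hne, xs, σ, l', ts', h1, h2, h3, h4, h5, h6, h7, h8, h9⟩
  · exact .inl h
  · refine .inr ⟨xs, σ, l', ts', ⟨hne, h2, h3, h4, h5, ?_, h7, ?_⟩, h9⟩
    · intro i c t hc ht
      obtain ⟨hi, rfl⟩ := List.getElem?_eq_some_iff.1 hc
      obtain ⟨hi', rfl⟩ := List.getElem?_eq_some_iff.1 ht
      exact h6 i hi hi'
    · intro x hx
      rw [h8 x hx, liftT_pats, seqCount_mapF]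

variable {ρ : CRule F V} {xs : List V} {σ : V → V} {l' : Term (F ⊕ ℕ) V}
  {ts' : List (Term (F ⊕ ℕ) V)}

namespace TData

theorem pats_eq (h : TData ρ xs σ l' ts') :
    (l' :: ts').map (Term.rename σ) = ρ.pats.map (Term.mapF Sum.inl) := by
  simp only [CRule.pats, List.map_cons, List.map_map, h.lhs]
  congr 1
  apply List.ext_getElem?
  intro i
  simp only [List.getElem?_map]
  rcases hc : ρ.conds[i]? with _ | c
  · have : ts'[i]? = none := by
      rw [List.getElem?_eq_none_iff] at *; rw [h.len]; exact hc
    simp [this]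
  · have : i < ts'.length := by rw [h.len]; exact (List.getElem?_eq_some_iff.1 hc).1
    have ht : ts'[i]? = some ts'[i] := by simp [this]
    simp [ht, h.ts i c _ hc ht]

theorem occ {x : V} (h : 0 < seqCount x ρ.pats) : OccursInRule ρ x := by
  obtain ⟨t, ht, hx⟩ := (seqCount_pos _ _).1 h
  refine (seqCount_pos _ _).2 ⟨t, ?_, hx⟩
  simp only [CRule.pats, List.mem_cons, List.mem_map] at ht
  rcases ht with rfl | ⟨c, hc, rfl⟩
  · simp
  · simp only [List.mem_cons, List.mem_flatMap]
    exact .inr (.inr ⟨c, hc, by simp⟩)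

theorem occ_src {x : V} (h : 0 < seqCount x ρ.srcs) : OccursInRule ρ x := by
  obtain ⟨t, ht, hx⟩ := (seqCount_pos _ _).1 h
  refine (seqCount_pos _ _).2 ⟨t, ?_, hx⟩
  simp only [CRule.srcs, List.mem_cons, List.mem_map] at ht
  rcases ht with rfl | ⟨c, hc, rfl⟩
  · simp
  · simp only [List.mem_cons, List.mem_flatMap]
    exact .inr (.inr ⟨c, hc, by simp⟩)

theorem le_one (h : TData ρ xs σ l' ts') (x : V) : seqCount x (l' :: ts') ≤ 1 := by
  by_cases hx : x ∈ xs
  · rw [h.one x hx]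
  · rw [h.other x hx]; split <;> omega

theorem img (h : TData ρ xs σ l' ts') {z : V} (hz : z ∈ xs) :
    σ z ∉ xs ∧ 2 ≤ seqCount (σ z) ρ.pats ∧ seqCount (σ z) (l' :: ts') = 0 := by
  have h1 := h.one z hz
  have hp : 0 < seqCount (σ z) ρ.pats := by
    rw [← seqCount_mapF (G := F ⊕ ℕ) _ Sum.inl, ← h.pats_eq]
    obtain ⟨t, ht, hx⟩ := (seqCount_pos _ _).1 (show 0 < seqCount z (l' :: ts') by omega)
    exact (seqCount_pos _ _).2 ⟨_, List.mem_map_of_mem ht, (Term.count_rename_pos _ _ _).2 ⟨z, rfl, hx⟩⟩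
  have hn : σ z ∉ xs := fun hm => h.fresh _ hm (occ hp)
  have ha := seqCount_rename_add σ (σ z) z (h.fix _ hn) rfl (fun e => hn (e ▸ hz)) (l' :: ts')
  rw [h.pats_eq, seqCount_mapF, h1, h.other _ hn] at ha
  rw [h.other _ hn]
  refine ⟨hn, ?_⟩
  split at ha
  · omega
  · rw [if_neg (by omega)]; omega

theorem fixfix (h : TData ρ xs σ l' ts') (z : V) : σ (σ z) = σ z := by
  by_cases hz : z ∈ xs
  · exact h.fix _ (h.img hz).1
  · rw [h.fix z hz, h.fix z hz]

theorem uniq (h : TData ρ xs σ l' ts') {x : V} (hx : seqCount x ρ.pats = 1) :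
    x ∉ xs ∧ seqCount x (l' :: ts') = 1 ∧ ∀ z, σ z = x → z = x := by
  have hn : x ∉ xs := fun hm => h.fresh _ hm (occ (by omega))
  refine ⟨hn, ?_, ?_⟩
  · rw [h.other x hn, if_pos (by omega), hx]
  · intro z hz
    by_cases hm : z ∈ xs
    · have := (h.img hm).2.1
      rw [hz] at this; omega
    · rw [h.fix z hm] at hz; exact hz

theorem prefix_pos (h : TData ρ xs σ l' ts') {x : V} (hx : seqCount x ρ.pats = 1) (j : ℕ)
    (hj : 0 < seqCount x (ρ.lhs :: (ρ.conds.take j).map Prod.snd)) :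
    0 < seqCount x (l' :: ts'.take j) := by
  have e : (l' :: ts'.take j).map (Term.rename σ) =
      (ρ.lhs :: (ρ.conds.take j).map Prod.snd).map (Term.mapF Sum.inl) := by
    have := congrArg (List.take (j+1)) h.pats_eq
    simpa [CRule.pats, ← List.map_take] using this
  rw [← seqCount_mapF (G := F ⊕ ℕ) _ Sum.inl, ← e] at hj
  obtain ⟨t, ht, hp⟩ := (seqCount_pos _ _).1 hj
  obtain ⟨t', ht', rfl⟩ := List.mem_map.1 ht
  obtain ⟨z, hz, hp⟩ := (Term.count_rename_pos _ _ _).1 hp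
  rw [(h.uniq hx).2.2 z hz] at hp
  exact (seqCount_pos _ _).2 ⟨t', ht', hp⟩

theorem cond_lt (h : TData ρ xs σ l' ts') {j : ℕ} {c : Term F V × Term F V}
    (hc : ρ.conds[j]? = some c) : ∃ t, ts'[j]? = some t ∧
      (TRule ρ xs σ l' ts').conds[j]? = some (c.1.mapF Sum.inl, t) := by
  have hj : j < ρ.conds.length := (List.getElem?_eq_some_iff.1 hc).1
  have ht : ts'[j]? = some (ts'[j]'(by rw [h.len]; exact hj)) := by simp
  refine ⟨_, ht, ?_⟩
  simp only [TRule]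
  rw [List.getElem?_append_left (by simp [h.len]; exact hj)]
  rw [List.getElem?_zip_eq_some]
  exact ⟨by simp [hc], ht⟩

theorem cond_last (h : TData ρ xs σ l' ts') :
    (TRule ρ xs σ l' ts').conds[ρ.conds.length]? =
      some (.app (Sum.inr xs.length) (xs.map Term.var),
                .app (Sum.inr xs.length) (xs.map (fun x => Term.var (σ x)))) := by
  simp only [TRule]
  rw [List.getElem?_append_right (by simp [h.len])]
  simp [h.len]

theorem conds_len (h : TData ρ xs σ l' ts') :
    (TRule ρ xs σ l' ts').conds.length = ρ.conds.length + 1 := by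
  simp [TRule, h.len]

theorem take_eq (h : TData ρ xs σ l' ts') {j : ℕ} (hj : j ≤ ρ.conds.length) :
    ((TRule ρ xs σ l' ts').conds.take j).map Prod.snd = ts'.take j := by
  simp only [TRule]
  rw [List.take_append_of_le_length (by simp [h.len]; exact hj), List.map_take]
  rw [List.map_snd_zip (by simp [h.len])]

/-- the case distinction on the conditions of the transformed rule -/
theorem cond_cases (h : TData ρ xs σ l' ts') {j : ℕ} {c : Term (F ⊕ ℕ) V × Term (F ⊕ ℕ) V}
    (hc : (TRule ρ xs σ l' ts').conds[j]? = some c) :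
    (∃ d t, ρ.conds[j]? = some d ∧ ts'[j]? = some t ∧ j < ρ.conds.length ∧
      c = (d.1.mapF Sum.inl, t)) ∨
    (j = ρ.conds.length ∧ c = (.app (Sum.inr xs.length) (xs.map Term.var),
                .app (Sum.inr xs.length) (xs.map (fun x => Term.var (σ x))))) := by
  have hj := (List.getElem?_eq_some_iff.1 hc).1
  rw [h.conds_len] at hj
  rcases Nat.lt_or_ge j ρ.conds.length with hl | hl
  · have hd : ρ.conds[j]? = some ρ.conds[j] := by simp
    obtain ⟨t, ht, he⟩ := h.cond_lt hd
    rw [he] at hc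
    exact .inl ⟨_, t, hd, ht, hl, by simpa using hc.symm⟩
  · have : j = ρ.conds.length := by omega
    subst this
    rw [h.cond_last] at hc
    exact .inr ⟨rfl, by simpa using hc.symm⟩

theorem src_pos {j : ℕ} {d : Term F V × Term F V} (hd : ρ.conds[j]? = some d) {x : V}
    (hx : 0 < d.1.count x) : 0 < seqCount x ρ.srcs :=
  (seqCount_pos _ _).2 ⟨d.1, by
    simp only [CRule.srcs, List.mem_cons, List.mem_map]
    exact .inr ⟨d, List.mem_of_getElem? hd, rfl⟩, hx⟩

theorem rhs_pos {x : V} (hx : 0 < ρ.rhs.count x) : 0 < seqCount x ρ.srcs :=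
  (seqCount_pos _ _).2 ⟨ρ.rhs, by simp [CRule.srcs], hx⟩

theorem det' (hD : ρ.Det) {j : ℕ} {d : Term F V × Term F V} (hd : ρ.conds[j]? = some d) {x : V}
    (hx : 0 < d.1.count x) : 0 < seqCount x (ρ.lhs :: (ρ.conds.take j).map Prod.snd) := by
  obtain ⟨hj, rfl⟩ := List.getElem?_eq_some_iff.1 hd
  exact hD j hj x hx

theorem le_get {ts : List (Term (F ⊕ ℕ) V)} {j : ℕ} {t : Term (F ⊕ ℕ) V} (ht : ts[j]? = some t)
    (x : V) : seqCount x (ts.take j) + t.count x ≤ seqCount x ts := by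
  obtain ⟨hj, rfl⟩ := List.getElem?_eq_some_iff.1 ht
  have : ts = ts.take j ++ ts[j] :: ts.drop (j+1) := by simp
  conv_rhs => rw [this]
  simp only [seqCount_append, seqCount_cons]
  omega

theorem nice (h : TData ρ xs σ l' ts') (hD : ρ.Det) (hW : ρ.WLL) :
    NiceRule (TRule ρ xs σ l' ts') where
  unc := fun hc => by simp [TRule] at hc
  linL := fun _ x => by
    have := h.le_one x
    rw [seqCount_cons] at this
    simp only [TRule]; omega
  lin := by
    intro j c hc hj x
    rcases h.cond_cases hc with ⟨d, t, hd, ht, hl, rfl⟩ | ⟨rfl, rfl⟩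
    · have := h.le_one x
      have := le_get ht x
      rw [seqCount_cons] at *
      simp only; omega
    · rw [h.conds_len] at hj; omega
  linR := by
    intro j c hc x hx
    rcases h.cond_cases hc with ⟨d, t, hd, ht, hl, rfl⟩ | ⟨rfl, rfl⟩
    · have := h.le_one x
      have := le_get ht x
      rw [seqCount_cons] at *
      simp only; omega
    · have h1 := h.uniq (hW x (rhs_pos (by simpa [TRule] using hx)))
      have : ¬ 0 < (Term.app (Sum.inr xs.length) (xs.map (fun x => Term.var (σ x))) :
          Term (F ⊕ ℕ) V).count x := by
        rw [Term.count_pos_app]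
        rintro ⟨t, ht, hp⟩
        obtain ⟨z, hz, rfl⟩ := List.mem_map.1 ht
        have := h1.2.2 z ((Term.count_pos_var _ _).1 hp)
        exact h1.1 (this ▸ hz)
      simp only; omega
  disj := by
    intro j c hc x hx
    rcases h.cond_cases hc with ⟨d, t, hd, ht, hl, rfl⟩ | ⟨rfl, rfl⟩
    · rw [h.take_eq hl.le]
      have := h.le_one x
      have := le_get ht x
      rw [seqCount_cons] at *
      simp only [TRule] at hx ⊢; omega
    · rw [h.take_eq le_rfl, List.take_of_length_le (by rw [h.len])]
      obtain ⟨t, ht, hp⟩ := (Term.count_pos_app _ _ _).1 hx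
      obtain ⟨z, hz, rfl⟩ := List.mem_map.1 ht
      rw [← (Term.count_pos_var _ _).1 hp]
      exact (h.img hz).2.2
  det := by
    intro j c hc x hx
    rcases h.cond_cases hc with ⟨d, t, hd, ht, hl, rfl⟩ | ⟨rfl, rfl⟩
    · rw [h.take_eq hl.le]
      rw [Term.count_mapF] at hx
      exact h.prefix_pos (hW x (src_pos hd hx)) j (det' hD hd hx)
    · rw [h.take_eq le_rfl, List.take_of_length_le (by rw [h.len])]
      obtain ⟨t, ht, hp⟩ := (Term.count_pos_app _ _ _).1 hx
      obtain ⟨z, hz, rfl⟩ := List.mem_map.1 ht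
      rw [← (Term.count_pos_var _ _).1 hp]
      show 0 < seqCount z (l' :: ts')
      rw [h.one z hz]; omega
  rhsv := by
    intro _ x hx
    have h1 := h.uniq (hW x (rhs_pos (by simpa [TRule] using hx)))
    obtain ⟨t, ht, hp⟩ := (seqCount_pos _ _).1 (show 0 < seqCount x (l' :: ts') by omega)
    refine (seqCount_pos _ _).2 ⟨t, ?_, hp⟩
    simp only [TRule, CRule.pats, List.map_append, List.mem_cons, List.mem_append] at ht ⊢
    rw [List.map_snd_zip (by simp [h.len])]
    tauto

end TData

theorem nice_unc (hc : ρ.conds = []) (hW : ρ.WLL) : NiceRule ρ.liftT where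
  unc := by
    intro _ x hx
    simp only [CRule.liftT, Term.count_mapF] at hx ⊢
    have := hW x (TData.rhs_pos hx)
    simpa [CRule.pats, hc] using this
  linL := fun h => by simp [CRule.liftT, hc] at h
  lin := by intro j c h; simp [CRule.liftT, hc] at h
  linR := by intro j c h; simp [CRule.liftT, hc] at h
  disj := by intro j c h; simp [CRule.liftT, hc] at h
  det := by intro j c h; simp [CRule.liftT, hc] at h
  rhsv := fun h => by simp [CRule.liftT, hc] at h

theorem mkSetup {R : CTRS F V} (hD : IsDCTRS R) (hW : IsWLL R)
    {R' : CTRS (F ⊕ ℕ) V} (hT : IsT R R')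
    {ar mOf : (F ⊕ ℕ) → ℕ} {idx : CRule (F ⊕ ℕ) V → ℕ}
    (hS : GoodSetup R' ar mOf idx) : Setup R' ar mOf idx where
  wf := hS.1
  nv := hS.2.1
  idx := hS.2.2.1
  nice := by
    intro ρ' hρ'
    obtain ⟨ρ, hρ, h⟩ := hT.2 ρ' hρ'
    rcases h.data with ⟨hc, rfl⟩ | ⟨xs, σ, l', ts', hd, rfl⟩
    · exact nice_unc hc (hW ρ hρ)
    · exact hd.nice (hD ρ hρ).1 (hW ρ hρ)

end tpart

set_option autoImplicit false
set_option linter.unusedSectionVars false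

section tsound
variable {F V : Type} [DecidableEq V]

theorem mapF_inj {G : Type} (g : F → G) (hg : Function.Injective g) (s t : Term F V)
    (h : s.mapF g = t.mapF g) : s = t := by
  induction s using Term.ind generalizing t with
  | hv x => cases t <;> simp at h; rw [h]
  | ha f ss ih =>
    cases t with
    | var y => simp at h
    | app f' ts =>
      simp only [Term.mapF_app, Term.app.injEq] at h
      obtain ⟨h1, h2⟩ := h
      rw [hg h1]
      congr 1
      apply List.ext_getElem?
      intro i
      have := congrArg (fun l => l[i]?) h2
      simp only [List.getElem?_map] at this
      rcases hs : ss[i]? with _ | a <;> rcases ht : ts[i]? with _ | b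
      · rfl
      · simp [hs, ht] at this
      · simp [hs, ht] at this
      · simp [hs, ht] at this
        rw [ih a (List.mem_of_getElem? hs) b this]

/-- `t` is a term over the original signature -/
def IsLift (t : Term (F ⊕ ℕ) V) : Prop := ∃ t0 : Term F V, t = t0.mapF Sum.inl

theorem isLift_app {f : F ⊕ ℕ} {ts : List (Term (F ⊕ ℕ) V)} :
    IsLift (.app f ts) ↔ (∃ f0, f = Sum.inl f0) ∧ ∀ t ∈ ts, IsLift t := by
  constructor
  · rintro ⟨t0, h⟩
    cases t0 with
    | var => simp at h
    | app f0 us =>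
      simp only [Term.mapF_app, Term.app.injEq] at h
      obtain ⟨rfl, rfl⟩ := h
      refine ⟨⟨_, rfl⟩, ?_⟩
      intro t ht
      obtain ⟨u, _, rfl⟩ := List.mem_map.1 ht
      exact ⟨u, rfl⟩
  · rintro ⟨⟨f0, rfl⟩, h⟩
    have : ∃ us : List (Term F V), ts = us.map (Term.mapF Sum.inl) := by
      induction ts with
      | nil => exact ⟨[], rfl⟩
      | cons t ts ih =>
        obtain ⟨us, rfl⟩ := ih (fun t ht => h t (by simp [ht]))
        obtain ⟨u, rfl⟩ := h t (by simp)
        exact ⟨u :: us, rfl⟩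
    obtain ⟨us, rfl⟩ := this
    exact ⟨.app f0 us, by simp⟩

theorem isLift_var_of_subst (t : Term (F ⊕ ℕ) V) (θ : V → Term (F ⊕ ℕ) V)
    (h : IsLift (t.subst θ)) (x : V) (hx : 0 < t.count x) : IsLift (θ x) := by
  induction t using Term.ind with
  | hv y => rw [Term.count_pos_var] at hx; subst hx; simpa using h
  | ha f ts ih =>
    obtain ⟨t, ht, hx⟩ := (Term.count_pos_app _ _ _).1 hx
    rw [Term.subst_app, isLift_app] at h
    exact ih t ht (h.2 _ (List.mem_map_of_mem ht)) hx

theorem isLift_of_subst (t : Term (F ⊕ ℕ) V) (θ : V → Term (F ⊕ ℕ) V)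
    (h : IsLift (t.subst θ)) : IsLift t := by
  induction t using Term.ind with
  | hv y => exact ⟨.var y, by simp⟩
  | ha f ts ih =>
    rw [Term.subst_app, isLift_app] at h
    rw [isLift_app]
    exact ⟨h.1, fun t ht => ih t ht (h.2 _ (List.mem_map_of_mem ht))⟩

theorem lift_subst (t : Term F V) (θ : V → Term (F ⊕ ℕ) V) (θ0 : V → Term F V)
    (h : ∀ x, 0 < t.count x → θ x = (θ0 x).mapF Sum.inl) :
    (t.mapF Sum.inl).subst θ = (t.subst θ0).mapF Sum.inl := by
  rw [Term.mapF_subst]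
  apply Term.subst_congr
  simpa using h

theorem lift_inj {s t : Term F V} (h : (s.mapF Sum.inl : Term (F ⊕ ℕ) V) = t.mapF Sum.inl) :
    s = t := mapF_inj _ Sum.inl_injective _ _ h

variable {R : CTRS F V} {R' : CTRS (F ⊕ ℕ) V}

theorem lift_ren {σ : V → V} {θ : V → Term (F ⊕ ℕ) V} {θ0 : V → Term F V}
    (w' : Term (F ⊕ ℕ) V) (w u : Term F V) (hw : w'.rename σ = w.mapF Sum.inl)
    (hu : w'.subst θ = u.mapF Sum.inl)
    (h1 : ∀ x, 0 < w'.count x → θ x = (θ0 x).mapF Sum.inl)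
    (h2 : ∀ x, 0 < w'.count x → RedStar R (θ0 x) (θ0 (σ x))) :
    RedStar R u (w.subst θ0) := by
  obtain ⟨w0, rfl⟩ := isLift_of_subst _ _ ⟨u, hu⟩
  simp only [Term.count_mapF] at h1 h2
  rw [lift_subst w0 θ θ0 h1] at hu
  rw [← lift_inj hu]
  unfold Term.rename at hw
  rw [lift_subst w0 _ (fun x => Term.var (σ x)) (by simp)] at hw
  rw [← lift_inj hw, Term.subst_subst]
  exact RedStar.subst _ _ _ (by simpa using h2)

theorem star_lift {r : Term (F ⊕ ℕ) V → Term (F ⊕ ℕ) V → Prop}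
    (h : ∀ s t, r (s.mapF Sum.inl) t → ∃ t0 : Term F V, t = t0.mapF Sum.inl ∧ RedStar R s t0)
    {s : Term F V} {t : Term (F ⊕ ℕ) V} (hs : Relation.ReflTransGen r (s.mapF Sum.inl) t) :
    ∃ t0 : Term F V, t = t0.mapF Sum.inl ∧ RedStar R s t0 := by
  induction hs with
  | refl => exact ⟨s, rfl, .refl⟩
  | tail _ h2 ih =>
    obtain ⟨t0, rfl, h1⟩ := ih
    obtain ⟨t1, rfl, h3⟩ := h _ _ h2
    exact ⟨t1, rfl, Relation.ReflTransGen.trans h1 h3⟩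

theorem tuple_step (hroot : ∀ ρ' ∈ R', ∃ f ws, ρ'.lhs = .app (Sum.inl f) ws)
    {n m : ℕ} {as : List (Term (F ⊕ ℕ) V)} {u : Term (F ⊕ ℕ) V}
    (h : LevelStep R' n (.app (Sum.inr m) as) u) :
    ∃ bs, u = .app (Sum.inr m) bs ∧
      List.Forall₂ (Relation.ReflTransGen (LevelStep R' n)) as bs := by
  rcases n with _ | n
  · exact h.elim
  · generalize hs : (Term.app (Sum.inr m) as : Term (F ⊕ ℕ) V) = s at h
    cases h with
    | root h =>
      obtain ⟨ρ, hρ, σ, h1, _⟩ := h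
      obtain ⟨f, ws, hl⟩ := hroot ρ hρ
      rw [← hs, hl] at h1
      simp at h1
    | @congr f pre post a b h =>
      simp only [Term.app.injEq] at hs
      obtain ⟨rfl, rfl⟩ := hs
      refine ⟨_, rfl, ?_⟩
      apply List.rel_append
      · exact List.forall₂_same.2 (fun _ _ => .refl)
      · exact .cons (.single h) (List.forall₂_same.2 (fun _ _ => .refl))

theorem tuple_star (hroot : ∀ ρ' ∈ R', ∃ f ws, ρ'.lhs = .app (Sum.inl f) ws)
    {n m : ℕ} {as : List (Term (F ⊕ ℕ) V)} {u : Term (F ⊕ ℕ) V}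
    (h : Relation.ReflTransGen (LevelStep R' n) (.app (Sum.inr m) as) u) :
    ∃ bs, u = .app (Sum.inr m) bs ∧
      List.Forall₂ (Relation.ReflTransGen (LevelStep R' n)) as bs := by
  induction h with
  | refl => exact ⟨as, rfl, List.forall₂_same.2 (fun _ _ => .refl)⟩
  | tail _ h2 ih =>
    obtain ⟨bs, rfl, h1⟩ := ih
    obtain ⟨cs, rfl, h3⟩ := tuple_step hroot h2
    refine ⟨cs, rfl, ?_⟩
    rw [List.forall₂_iff_get] at *
    refine ⟨h1.1.trans h3.1, fun i hi hi' =>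
      (h1.2 i hi (by have := h1.1; omega)).trans (h3.2 i (by have := h1.1; omega) hi')⟩

theorem T_root (hD : IsDCTRS R) (hW : IsWLL R) (hT : IsT R R')
    (hroot : ∀ ρ' ∈ R', ∃ f ws, ρ'.lhs = .app (Sum.inl f) ws) (n : ℕ)
    (ihn : ∀ (s : Term F V) t, LevelStep R' n (s.mapF Sum.inl) t →
      ∃ t0 : Term F V, t = t0.mapF Sum.inl ∧ RedStar R s t0)
    (s : Term F V) (t : Term (F ⊕ ℕ) V)
    (h : RootStep R' (LevelStep R' n) (s.mapF Sum.inl) t) :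
    ∃ t0 : Term F V, t = t0.mapF Sum.inl ∧ RedStar R s t0 := by
  obtain ⟨ρ', hρ', θ, hs, rfl, hc⟩ := h
  obtain ⟨ρ, hρ, hTR⟩ := hT.2 ρ' hρ'
  have hWρ := hW ρ hρ
  obtain ⟨θ0, hθ0⟩ : ∃ θ0 : V → Term F V, ∀ x, IsLift (θ x) → θ x = (θ0 x).mapF Sum.inl := by
    have : ∀ x, ∃ t0 : Term F V, IsLift (θ x) → θ x = t0.mapF Sum.inl := by
      intro x
      by_cases h : IsLift (θ x)
      · obtain ⟨t0, h⟩ := h; exact ⟨t0, fun _ => h⟩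
      · exact ⟨.var x, fun h' => (h h').elim⟩
    choose θ0 h using this
    exact ⟨θ0, h⟩
  rcases hTR.data with ⟨hnil, rfl⟩ | ⟨xs, σ, l', ts', hd, rfl⟩
  · have hv : ∀ x, 0 < ρ.lhs.count x → θ x = (θ0 x).mapF Sum.inl := by
      intro x hx
      exact hθ0 x (isLift_var_of_subst _ _ ⟨s, hs.symm⟩ x (by simpa [CRule.liftT] using hx))
    have hv' : ∀ x, 0 < ρ.rhs.count x → θ x = (θ0 x).mapF Sum.inl := by
      intro x hx
      apply hv
      have := hWρ x (TData.rhs_pos hx)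
      simp [CRule.pats, hnil] at this
      omega
    simp only [CRule.liftT] at hs ⊢
    rw [lift_subst _ _ _ hv] at hs
    rw [lift_subst _ _ _ hv', lift_inj hs]
    exact ⟨_, rfl, .single (Red.fire hρ θ0 (by simp [hnil]))⟩
  · have hnice := hd.nice (hD ρ hρ).1 hWρ
    have hst : ∀ (j : ℕ) d t, ρ.conds[j]? = some d → ts'[j]? = some t →
        (∀ x, 0 < seqCount x (l' :: ts'.take j) → IsLift (θ x)) →
        ∃ u, t.subst θ = u.mapF Sum.inl ∧ RedStar R (d.1.subst θ0) u := by
      intro j d t hdj ht hl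
      obtain ⟨t2, ht2, hcj⟩ := hd.cond_lt hdj
      rw [ht] at ht2; simp at ht2; subst ht2
      have h1 := hc _ (List.mem_of_getElem? hcj)
      have hj : j < ρ.conds.length := (List.getElem?_eq_some_iff.1 hdj).1
      simp only at h1
      rw [lift_subst _ _ θ0 (fun x hx => hθ0 x (hl x (by
        have := hnice.det j _ hcj x (by simpa using hx)
        rw [hd.take_eq hj.le] at this
        exact this)))] at h1
      exact star_lift ihn h1
    have hpre : ∀ j ≤ ρ.conds.length, ∀ x, 0 < seqCount x (l' :: ts'.take j) → IsLift (θ x) := by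
      intro j
      induction j with
      | zero =>
        intro _ x hx
        exact isLift_var_of_subst _ _ ⟨s, hs.symm⟩ x (by simpa [TRule] using hx)
      | succ j ih =>
        intro hj x hx
        have hj' : j < ts'.length := by rw [hd.len]; omega
        have hdj : ρ.conds[j]? = some ρ.conds[j] := by simp
        have htj : ts'[j]? = some ts'[j] := by simp
        rw [List.take_succ_eq_append_getElem hj', ← List.cons_append, seqCount_append] at hx
        by_cases h0 : 0 < seqCount x (l' :: ts'.take j)
        · exact ih (by omega) x h0
        · obtain ⟨u, hu, _⟩ := hst j _ _ hdj htj (ih (by omega))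
          refine isLift_var_of_subst _ _ ⟨u, hu⟩ x ?_
          simp only [seqCount_cons, seqCount_nil] at hx h0 ⊢
          omega
    have hall : ∀ x, 0 < seqCount x (l' :: ts') → θ x = (θ0 x).mapF Sum.inl := by
      intro x hx
      refine hθ0 x (hpre _ le_rfl x ?_)
      rwa [List.take_of_length_le (by rw [hd.len])]
    have hxs : ∀ x, RedStar R (θ0 x) (θ0 (σ x)) := by
      intro x
      by_cases hx : x ∈ xs
      · have h1 := hc _ (List.mem_of_getElem? hd.cond_last)
        simp only [Term.subst_app, List.map_map] at h1
        obtain ⟨bs, hb, h2⟩ := tuple_star hroot h1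
        simp only [Term.app.injEq, true_and] at hb
        subst hb
        rw [List.forall₂_map_left_iff, List.forall₂_map_right_iff, List.forall₂_same] at h2
        have h3 := h2 x hx
        simp only [Function.comp, Term.subst_var] at h3
        rw [hall x (by rw [hd.one x hx]; omega)] at h3
        obtain ⟨u, hu, h4⟩ := star_lift ihn h3
        have := hθ0 _ ⟨u, hu⟩
        rw [hu] at this
        rw [← lift_inj this]
        exact h4
      · rw [hd.fix x hx]; exact .refl
    have hrv : ∀ x, 0 < ρ.rhs.count x → θ x = (θ0 x).mapF Sum.inl := by
      intro x hx
      apply hall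
      rw [(hd.uniq (hWρ x (TData.rhs_pos hx))).2.1]; omega
    refine ⟨ρ.rhs.subst θ0, lift_subst _ _ _ hrv, ?_⟩
    have hl : RedStar R s (ρ.lhs.subst θ0) := by
      refine lift_ren (θ := θ) l' ρ.lhs s hd.lhs hs.symm ?_ (fun x _ => hxs x)
      intro x hx
      apply hall; rw [seqCount_cons]; omega
    refine Relation.ReflTransGen.tail hl (Red.fire hρ θ0 ?_)
    intro d hdm
    obtain ⟨j, hj, rfl⟩ := List.getElem_of_mem hdm
    have hj' : j < ts'.length := by rw [hd.len]; omega
    have hdj : ρ.conds[j]? = some ρ.conds[j] := by simp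
    have htj : ts'[j]? = some ts'[j] := by simp
    obtain ⟨u, hu, h1⟩ := hst j _ _ hdj htj (hpre j hj.le)
    refine Relation.ReflTransGen.trans h1 ?_
    refine lift_ren (θ := θ) _ _ u (hd.ts j _ _ hdj htj) hu ?_ (fun x _ => hxs x)
    intro x hx
    apply hall
    have := TData.le_get htj x
    rw [seqCount_cons]; omega

theorem T_level (hD : IsDCTRS R) (hW : IsWLL R) (hT : IsT R R')
    (hroot : ∀ ρ' ∈ R', ∃ f ws, ρ'.lhs = .app (Sum.inl f) ws) (n : ℕ) :
    ∀ (s : Term F V) t, LevelStep R' n (s.mapF Sum.inl) t →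
      ∃ t0 : Term F V, t = t0.mapF Sum.inl ∧ RedStar R s t0 := by
  induction n with
  | zero => intro s t h; exact h.elim
  | succ n ihn =>
    intro s t h
    generalize hs : (s.mapF Sum.inl : Term (F ⊕ ℕ) V) = s' at h
    induction h generalizing s with
    | root h => subst hs; exact T_root hD hW hT hroot n ihn s _ h
    | @congr f pre post a b h ih =>
      cases s with
      | var => simp at hs
      | app f0 us =>
        simp only [Term.mapF_app, Term.app.injEq] at hs
        obtain ⟨rfl, hs⟩ := hs
        obtain ⟨p, q, rfl, rfl, hq⟩ := List.map_eq_append_iff.1 hs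
        obtain ⟨a0, q, rfl, rfl, rfl⟩ := List.map_eq_cons_iff.1 hq
        obtain ⟨b0, rfl, h1⟩ := ih a0 rfl
        exact ⟨.app f0 (p ++ b0 :: q), by simp, RedStar.congr1 h1⟩

theorem T_hroot (hD : IsDCTRS R) (hT : IsT R R') (hnv : ∀ ρ' ∈ R', ∃ f ws, ρ'.lhs = .app f ws) :
    ∀ ρ' ∈ R', ∃ f ws, ρ'.lhs = .app (Sum.inl f) ws := by
  intro ρ' hρ'
  obtain ⟨ρ, hρ, h⟩ := hT.2 ρ' hρ'
  obtain ⟨f, ws, hl⟩ := hnv ρ' hρ'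
  have h1 : ∃ τ : V → V, ρ'.lhs.rename τ = ρ.lhs.mapF Sum.inl := by
    rcases h.data with ⟨_, rfl⟩ | ⟨xs, σ, l', ts', hd, rfl⟩
    · exact ⟨id, Term.subst_id _⟩
    · exact ⟨σ, hd.lhs⟩
  obtain ⟨τ, h1⟩ := h1
  rw [hl] at h1 ⊢
  have := isLift_of_subst _ _ ⟨_, h1⟩
  obtain ⟨⟨f0, rfl⟩, _⟩ := isLift_app.1 this
  exact ⟨f0, ws, rfl⟩

theorem T_sound (hD : IsDCTRS R) (hW : IsWLL R) (hT : IsT R R')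
    (hnv : ∀ ρ' ∈ R', ∃ f ws, ρ'.lhs = .app f ws) (s : Term F V) (t : Term (F ⊕ ℕ) V)
    (h : RedStar R' (s.mapF Sum.inl) t) :
    ∃ t0 : Term F V, t = t0.mapF Sum.inl ∧ RedStar R s t0 :=
  star_lift (fun s t ⟨n, hn⟩ => T_level hD hW hT (T_hroot hD hT hnv) n s t hn) h

theorem unliftT_lift (t : Term F V) : unliftT (t.mapF Sum.inl) = some t := by
  induction t using Term.ind with
  | hv x => simp [unliftT]
  | ha f ts ih =>
    rw [Term.mapF_app, unliftT]
    have : (ts.map (Term.mapF Sum.inl)).attach.mapM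
        (fun t : {x // x ∈ ts.map (Term.mapF (Sum.inl : F → F ⊕ ℕ))} => unliftT t.1) = some ts := by
      rw [List.mapM_subtype (g := unliftT) (by simp)]
      simp only [List.unattach_attach, List.mapM_map]
      clear * - ih
      induction ts with
      | nil => simp
      | cons t ts ih2 =>
        have h1 := ih2 (fun t ht => ih t (by simp [ht]))
        have h2 := ih t (by simp)
        simp only [List.mapM_cons, Function.comp] at h1 ⊢
        simp [h1, h2]
    rw [this]; rfl

end tsound

set_option autoImplicit false
set_option linter.unusedSectionVars false

section compl
variable {F V : Type} [DecidableEq V] {R : CTRS F V} {ar mOf : F → ℕ} {idx : CRule F V → ℕ}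

/-- The substitution used for simulating rewrite steps. -/
def bsub (mOf : F → ℕ) (θ : V → Term F V) : WVar V → STerm F V :=
  Sum.elim (fun x => barT mOf (θ x)) (fun _ => botT)

theorem botT_subst (σ : WVar V → STerm F V) : (botT : STerm F V).subst σ = botT := by
  simp [botT]

theorem guardT_subst (t : STerm F V) (σ : WVar V → STerm F V) :
    (guardT t).subst σ = guardT (t.subst σ) := by
  simp [guardT]

theorem barT_subst (θ : V → Term F V) (t : Term F V) :
    (barT mOf t).subst (bsub mOf θ) = barT mOf (t.subst θ) := by
  induction t using Term.ind with
  | hv x => simp [bsub]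
  | ha f ts ih =>
    simp only [barT_app, Term.subst_app, List.map_append, List.map_map, List.map_replicate,
      botT_subst]
    congr 2
    apply List.map_congr_left
    intro t ht
    exact ih t ht

theorem extTList_subst' (θ : V → Term F V) (ws : List (Term F V))
    (ih : ∀ w ∈ ws, ∀ c, (extT mOf w c).1.subst (bsub mOf θ) = barT mOf (w.subst θ)) (c : ℕ) :
    (extTList mOf ws c).1.map (Term.subst (bsub mOf θ)) =
      (ws.map (Term.subst θ)).map (barT mOf) := by
  induction ws generalizing c with
  | nil => simp [extTList]
  | cons w ws ih2 =>
    simp [extTList, ih w (by simp), ih2 (fun w hw => ih w (by simp [hw]))]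

theorem extT_subst (θ : V → Term F V) (w : Term F V) : ∀ c,
    (extT mOf w c).1.subst (bsub mOf θ) = barT mOf (w.subst θ) := by
  induction w using Term.ind with
  | hv x => intro c; simp [extT, bsub]
  | ha f ws ih =>
    intro c
    rw [extT_app]
    simp only [Term.subst_app, List.map_append, barT_app, extTList_subst' θ ws ih c]
    congr 2
    apply List.ext_getElem
    · simp
    · intro i h1 h2; simp [bsub]

theorem extTList_subst (θ : V → Term F V) (ws : List (Term F V)) (c : ℕ) :
    (extTList mOf ws c).1.map (Term.subst (bsub mOf θ)) =
      (ws.map (Term.subst θ)).map (barT mOf) :=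
  extTList_subst' θ ws (fun w _ => extT_subst θ w) c

/-- Ground slots. -/
def slotB (m i : ℕ) (mid : STerm F V) : List (STerm F V) :=
  (List.range m).map (fun q => if q = i - 1 then mid else botT)

theorem slotL_subst (θ : V → Term F V) (m i c0 : ℕ) (mid : STerm F V) :
    (slotL m i c0 mid).map (Term.subst (bsub mOf θ)) = slotB m i (mid.subst (bsub mOf θ)) := by
  simp only [slotL, slotB, List.map_map]
  apply List.map_congr_left
  intro q _
  simp only [Function.comp]
  split
  · rfl
  · simp [bsub]

theorem slotB_bot (m i : ℕ) : slotB m i (botT : STerm F V) = List.replicate m botT := by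
  apply List.ext_getElem
  · simp [slotB]
  · intro i h1 h2; simp [slotB]

theorem SR_root {r : CRule (SSym F V) (WVar V)} (hr : r ∈ SRSys R ar mOf idx)
    (σ : WVar V → STerm F V) : Red (SRSys R ar mOf idx) (r.lhs.subst σ) (r.rhs.subst σ) :=
  Red_SR.2 (.root ⟨r, hr, σ, rfl, rfl⟩)

/-- Intermediate states of the evaluation of conditions. -/
def stT (mOf : F → ℕ) (idx : CRule F V → ℕ) (ρ : CRule F V) (f : F) (ws : List (Term F V))
    (θ : V → Term F V) (j : ℕ) (e : STerm F V) : STerm F V :=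
  .app (.orig f) ((ws.map (Term.subst θ)).map (barT mOf) ++ slotB (mOf f) (idx ρ)
    (.app (.tup ρ j) (guardT e :: (Vlist ρ j).map (fun x => barT mOf (θ x)))))

theorem stT_star {ρ : CRule F V} {f : F} {ws : List (Term F V)}
    {θ : V → Term F V} {j : ℕ} {e e' : STerm F V}
    (h : RedStar (SRSys R ar mOf idx) (guardT e) (guardT e')) :
    RedStar (SRSys R ar mOf idx) (stT mOf idx ρ f ws θ j e) (stT mOf idx ρ f ws θ j e') := by
  unfold stT
  apply RedStar.congr
  unfold slotB
  rw [List.forall₂_map_left_iff, List.forall₂_map_right_iff, List.forall₂_same]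
  intro q _
  split
  · exact RedStar.congr1 (pre := []) h
  · exact .refl

theorem SR_fire (hS : Setup R ar mOf idx) {ρ : CRule F V} (hρ : ρ ∈ R) (θ : V → Term F V)
    (hc : ∀ c ∈ ρ.conds, RedStar (SRSys R ar mOf idx) (guardT (barT mOf (c.1.subst θ)))
      (guardT (barT mOf (c.2.subst θ)))) :
    RedStar (SRSys R ar mOf idx) (barT mOf (ρ.lhs.subst θ)) (guardT (barT mOf (ρ.rhs.subst θ))) := by
  by_cases hne : ρ.conds = []
  · have := SR_root (ar := ar) (idx := idx) (R := R) (mOf := mOf) (.inl ⟨ρ, hρ, hne, rfl⟩) (bsub mOf θ)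
    simp only [uncondSRRule, extT_subst, guardT_subst, barT_subst] at this
    exact .single this
  · obtain ⟨f, ws, hl⟩ := hS.nv ρ hρ
    have hr : ∀ j ≤ ρ.conds.length, Red (SRSys R ar mOf idx)
        ((condSRRule mOf idx ρ j).lhs.subst (bsub mOf θ))
        ((condSRRule mOf idx ρ j).rhs.subst (bsub mOf θ)) := fun j hj =>
      SR_root (.inr (.inl ⟨ρ, hρ, hne, j, hj, rfl⟩)) (bsub mOf θ)
    have hb : ∀ x, bsub mOf θ (Sum.inl x) = barT mOf (θ x) := fun _ => rfl
    have hk : 0 < ρ.conds.length := List.length_pos_iff.2 hne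
    have main : ∀ j (hj : j < ρ.conds.length), RedStar (SRSys R ar mOf idx)
        (barT mOf (ρ.lhs.subst θ)) (stT mOf idx ρ f ws θ (j+1) (barT mOf (ρ.conds[j].1.subst θ))) := by
      intro j
      induction j with
      | zero =>
        intro hj
        have := hr 0 (by omega)
        rw [condSR_lhs ρ f ws hl, condSR_rhs ρ f ws hl, if_pos rfl, if_neg (by omega)] at this
        simp only [Term.subst_app, List.map_append, extTList_subst, slotL_subst, botT_subst,
          slotB_bot, tupT_subst, barT_subst, hb] at this
        rw [List.getD_eq_getElem _ _ hj] at this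
        rw [hl]
        simp only [Term.subst_app, barT_app]
        exact .single this
      | succ j ih =>
        intro hj
        refine Relation.ReflTransGen.trans (ih (by omega)) ?_
        refine Relation.ReflTransGen.trans (stT_star (hc _ (List.getElem_mem _))) ?_
        have := hr (j+1) (by omega)
        rw [condSR_lhs ρ f ws hl, condSR_rhs ρ f ws hl, if_neg (by omega), if_neg (by omega)] at this
        simp only [Term.subst_app, List.map_append, extTList_subst, slotL_subst,
          tupT_subst, barT_subst, hb, extT_subst, Nat.add_sub_cancel] at this
        rw [List.getD_eq_getElem _ _ hj, List.getD_eq_getElem _ _ (by omega)] at this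
        exact .single this
    obtain ⟨k, hk'⟩ : ∃ k, ρ.conds.length = k + 1 := ⟨ρ.conds.length - 1, by omega⟩
    refine Relation.ReflTransGen.trans (main k (by omega)) ?_
    refine Relation.ReflTransGen.trans (stT_star (hc _ (List.getElem_mem _))) ?_
    have := hr (k+1) (by omega)
    rw [condSR_lhs ρ f ws hl, condSR_rhs ρ f ws hl, if_neg (by omega), if_pos (by omega)] at this
    simp only [Term.subst_app, List.map_append, extTList_subst, slotL_subst,
      tupT_subst, barT_subst, hb, extT_subst, Nat.add_sub_cancel, guardT_subst] at this
    rw [List.getD_eq_getElem _ _ (by omega)] at this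
    exact .single this

theorem SR_guard (t : STerm F V) :
    Red (SRSys R ar mOf idx) (guardT (guardT t)) (guardT t) := by
  have := SR_root (ar := ar) (idx := idx) (R := R) (mOf := mOf)
    (.inr (.inr (.inl rfl))) (fun _ => t)
  simpa [auxGuard, guardT_subst] using this

theorem SR_shift (f : F) (pre post : List (STerm F V)) (a : STerm F V)
    (hlen : (pre ++ a :: post).length = ar f) :
    Red (SRSys R ar mOf idx)
      (.app (.orig f) ((pre ++ guardT a :: post) ++ List.replicate (mOf f) botT))
      (guardT (.app (.orig f) ((pre ++ a :: post) ++ List.replicate (mOf f) botT))) := by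
  have := SR_root (ar := ar) (idx := idx) (R := R) (mOf := mOf)
    (.inr (.inr (.inr ⟨f, pre.length, by rw [← hlen]; simp, rfl⟩)))
    (Sum.elim (fun _ => botT) (fun q => (pre ++ a :: post).getD q botT))
  simp only [auxShift, Term.subst_app, List.map_append, List.map_map, guardT_subst,
    List.map_replicate, botT_subst] at this
  convert this using 3
  · apply List.ext_getElem
    · simpa using hlen
    · intro i h1 h2
      simp only [List.getElem_map, List.getElem_range, Function.comp]
      by_cases hi : i = pre.length
      · subst hi; simp [guardT_subst]
      · rw [if_neg hi]
        have := getElem?_mid_ne pre post (guardT a) a i hi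
        rw [List.getElem?_eq_getElem h1] at this
        simp [List.getD, ← this]
  · apply List.ext_getElem
    · simp
    · intro i h1 h2
      simp only [List.getElem_map, List.getElem_range, Function.comp, List.getElem_replicate,
        Term.subst_var, Sum.elim_inr]
      rw [List.getD_eq_default _ _ (by omega)]
  · congr 1
    apply List.ext_getElem
    · simpa using hlen
    · intro i h1 h2
      simp only [List.getElem_map, List.getElem_range, Function.comp, Term.subst_var, Sum.elim_inr]
      rw [List.getD_eq_getElem _ _ h1]

theorem SR_guard_lift {s t : STerm F V} (h : RedStar (SRSys R ar mOf idx) s (guardT t)) :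
    RedStar (SRSys R ar mOf idx) (guardT s) (guardT t) :=
  Relation.ReflTransGen.tail (RedStar.congr1 (f := SSym.guard) (pre := []) (post := []) h)
    (SR_guard t)

end compl

section final
variable {F V : Type} [DecidableEq V] {R : CTRS F V} {R' : CTRS (F ⊕ ℕ) V}
  {ar mOf : F ⊕ ℕ → ℕ} {idx : CRule (F ⊕ ℕ) V → ℕ}

theorem C_root (hD : IsDCTRS R) (hW : IsWLL R) (hT : IsT R R') (hS : Setup R' ar mOf idx)
    (n : ℕ)
    (ihn : ∀ s t : Term F V, Relation.ReflTransGen (LevelStep R n) s t →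
      (s.mapF Sum.inl : Term (F ⊕ ℕ) V).WF ar → (t.mapF Sum.inl : Term (F ⊕ ℕ) V).WF ar ∧
      RedStar (SRSys R' ar mOf idx) (guardT (barT mOf (s.mapF Sum.inl)))
        (guardT (barT mOf (t.mapF Sum.inl))))
    (s t : Term F V) (h : RootStep R (LevelStep R n) s t)
    (hs : (s.mapF Sum.inl : Term (F ⊕ ℕ) V).WF ar) :
    (t.mapF Sum.inl : Term (F ⊕ ℕ) V).WF ar ∧
      RedStar (SRSys R' ar mOf idx) (barT mOf (s.mapF Sum.inl))
        (guardT (barT mOf (t.mapF Sum.inl))) := by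
  obtain ⟨ρ, hρ, θ, rfl, rfl, hc⟩ := h
  obtain ⟨ρ', hρ', hTR⟩ := hT.1 ρ hρ
  obtain ⟨hwl, hwr, hwc⟩ := hS.wf ρ' hρ'
  have hWρ := hW ρ hρ
  rcases hTR.data with ⟨hnil, rfl⟩ | ⟨xs, τ, l', ts', hd, rfl⟩
  · constructor
    · have hwr' : (ρ.rhs.mapF Sum.inl : Term (F ⊕ ℕ) V).WF ar := hwr
      have hwl' : (ρ.lhs.mapF Sum.inl : Term (F ⊕ ℕ) V).WF ar := hwl
      rw [Term.mapF_subst] at hs ⊢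
      rw [Term.WF.subst_iff _ _ _ hwr']
      rw [Term.WF.subst_iff _ _ _ hwl'] at hs
      intro x hx
      apply hs
      simp only [Term.count_mapF] at hx ⊢
      have := hWρ x (TData.rhs_pos hx)
      simp [CRule.pats, hnil] at this
      omega
    · have := SR_fire hS hρ' (fun x => (θ x).mapF Sum.inl) (by simp [CRule.liftT, hnil])
      rw [Term.mapF_subst, Term.mapF_subst]
      exact this
  · have hwl2 : (ρ.lhs.mapF Sum.inl : Term (F ⊕ ℕ) V).WF ar := by
      rw [← hd.lhs, Term.WF.of_rename]; exact hwl
    have hwc2 : ∀ (j : ℕ) d, ρ.conds[j]? = some d →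
        (d.1.mapF Sum.inl : Term (F ⊕ ℕ) V).WF ar ∧ (d.2.mapF Sum.inl : Term (F ⊕ ℕ) V).WF ar := by
      intro j d hdj
      obtain ⟨t, ht, hcj⟩ := hd.cond_lt hdj
      have := hwc _ (List.mem_of_getElem? hcj)
      refine ⟨this.1, ?_⟩
      rw [← hd.ts j d t hdj ht, Term.WF.of_rename]
      exact this.2
    have hst : ∀ (j : ℕ) d, ρ.conds[j]? = some d →
        (∀ x, 0 < seqCount x (ρ.lhs :: (ρ.conds.take j).map Prod.snd) →
          ((θ x).mapF Sum.inl : Term (F ⊕ ℕ) V).WF ar) →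
        ((d.2.subst θ).mapF Sum.inl : Term (F ⊕ ℕ) V).WF ar ∧
        RedStar (SRSys R' ar mOf idx) (guardT (barT mOf ((d.1.subst θ).mapF Sum.inl)))
          (guardT (barT mOf ((d.2.subst θ).mapF Sum.inl))) := by
      intro j d hdj hv
      apply ihn _ _ (hc d (List.mem_of_getElem? hdj))
      rw [Term.mapF_subst, Term.WF.subst_iff _ _ _ (hwc2 j d hdj).1]
      intro x hx
      exact hv x (TData.det' (hD ρ hρ).1 hdj (by simpa using hx))
    have hpre : ∀ j ≤ ρ.conds.length, ∀ x,
        0 < seqCount x (ρ.lhs :: (ρ.conds.take j).map Prod.snd) →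
          ((θ x).mapF Sum.inl : Term (F ⊕ ℕ) V).WF ar := by
      intro j
      induction j with
      | zero =>
        intro _ x hx
        rw [Term.mapF_subst, Term.WF.subst_iff _ _ _ hwl2] at hs
        exact hs x (by simpa using hx)
      | succ j ih =>
        intro hj x hx
        have hdj : ρ.conds[j]? = some ρ.conds[j] := by simp
        rw [List.take_succ_eq_append_getElem (by omega), List.map_append, ← List.cons_append,
          seqCount_append] at hx
        by_cases h0 : 0 < seqCount x (ρ.lhs :: (ρ.conds.take j).map Prod.snd)
        · exact ih (by omega) x h0
        · have h1 := (hst j _ hdj (ih (by omega))).1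
          rw [Term.mapF_subst, Term.WF.subst_iff _ _ _ (hwc2 j _ hdj).2] at h1
          apply h1 x
          simp only [List.map_cons, List.map_nil, seqCount_cons, seqCount_nil] at hx h0
          rw [Term.count_mapF]
          omega
    have hsub : ∀ (w : Term F V), (∀ x, 0 < w.count x → 0 < seqCount x ρ.srcs) →
        (w.mapF Sum.inl : Term (F ⊕ ℕ) V).subst (fun x => (θ (τ x)).mapF Sum.inl) =
          (w.subst θ).mapF Sum.inl := by
      intro w hw
      apply lift_subst
      intro x hx
      rw [hd.fix x]
      exact fun hm => hd.fresh x hm (TData.occ_src (hw x hx))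
    have hren : ∀ (w' : Term (F ⊕ ℕ) V) (w : Term F V), w'.rename τ = w.mapF Sum.inl →
        w'.subst (fun x => (θ (τ x)).mapF Sum.inl) = (w.subst θ).mapF Sum.inl := by
      intro w' w hw
      rw [Term.mapF_subst, ← hw, Term.rename, Term.subst_subst]
      simp
    constructor
    · have hwr' : (ρ.rhs.mapF Sum.inl : Term (F ⊕ ℕ) V).WF ar := hwr
      rw [Term.mapF_subst, Term.WF.subst_iff _ _ _ hwr']
      intro x hx
      apply hpre _ le_rfl x
      have := hWρ x (TData.rhs_pos (by simpa [TRule] using hx))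
      rw [List.take_length]
      show 0 < seqCount x ρ.pats
      omega
    · have := SR_fire hS hρ' (fun x => (θ (τ x)).mapF Sum.inl) ?_
      · simp only [TRule] at this
        rw [hren l' _ hd.lhs, hsub ρ.rhs (fun x hx => TData.rhs_pos hx)] at this
        exact this
      · intro c hcm
        obtain ⟨j, hj⟩ := List.mem_iff_getElem?.1 hcm
        rcases hd.cond_cases hj with ⟨d, t, hdj, ht, hl, rfl⟩ | ⟨rfl, rfl⟩
        · simp only
          rw [hsub d.1 (fun x hx => TData.src_pos hdj hx), hren t _ (hd.ts j d t hdj ht)]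
          exact (hst j d hdj (hpre j hl.le)).2
        · simp only [Term.subst_app, List.map_map, Function.comp_def, Term.subst_var, hd.fixfix]
          exact .refl

theorem C_ctx (r : Term F V → Term F V → Prop)
    (hr : ∀ s t, r s t → (s.mapF Sum.inl : Term (F ⊕ ℕ) V).WF ar →
      (t.mapF Sum.inl : Term (F ⊕ ℕ) V).WF ar ∧
      RedStar (SRSys R' ar mOf idx) (barT mOf (s.mapF Sum.inl))
        (guardT (barT mOf (t.mapF Sum.inl)))) (s t : Term F V) (h : CtxStep r s t)
    (hs : (s.mapF Sum.inl : Term (F ⊕ ℕ) V).WF ar) :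
    (t.mapF Sum.inl : Term (F ⊕ ℕ) V).WF ar ∧
      RedStar (SRSys R' ar mOf idx) (barT mOf (s.mapF Sum.inl))
        (guardT (barT mOf (t.mapF Sum.inl))) := by
  induction h with
  | root h => exact hr _ _ h hs
  | @congr f pre post a b h ih =>
    simp only [Term.mapF_app, List.map_append, List.map_cons] at hs ⊢
    have hlen := WF.len hs
    have harg := WF.arg hs
    obtain ⟨h1, h2⟩ := ih (harg _ (by simp))
    constructor
    · refine .app _ _ (by simpa using hlen) ?_
      intro t ht
      simp only [List.mem_append, List.mem_cons] at ht
      rcases ht with ht | rfl | ht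
      · exact harg _ (by simp only [List.mem_append]; exact .inl ht)
      · exact h1
      · exact harg _ (by simp only [List.mem_append, List.mem_cons]; exact .inr (.inr ht))
    · simp only [barT_app, List.map_append, List.map_cons]
      refine Relation.ReflTransGen.tail ?_ (SR_shift _ _ _ _ (by simpa using hlen))
      simp only [List.append_assoc, List.cons_append]
      exact RedStar.congr1 h2

theorem C_star (r : Term F V → Term F V → Prop)
    (hr : ∀ s t, r s t → (s.mapF Sum.inl : Term (F ⊕ ℕ) V).WF ar →
      (t.mapF Sum.inl : Term (F ⊕ ℕ) V).WF ar ∧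
      RedStar (SRSys R' ar mOf idx) (barT mOf (s.mapF Sum.inl))
        (guardT (barT mOf (t.mapF Sum.inl)))) (s t : Term F V)
    (h : Relation.ReflTransGen r s t)
    (hs : (s.mapF Sum.inl : Term (F ⊕ ℕ) V).WF ar) :
    (t.mapF Sum.inl : Term (F ⊕ ℕ) V).WF ar ∧
      RedStar (SRSys R' ar mOf idx) (guardT (barT mOf (s.mapF Sum.inl)))
        (guardT (barT mOf (t.mapF Sum.inl))) := by
  induction h with
  | refl => exact ⟨hs, .refl⟩
  | tail _ h2 ih =>
    obtain ⟨h3, h4⟩ := hr _ _ h2 ih.1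
    exact ⟨h3, Relation.ReflTransGen.trans ih.2 (SR_guard_lift h4)⟩

theorem C_level (hD : IsDCTRS R) (hW : IsWLL R) (hT : IsT R R') (hS : Setup R' ar mOf idx)
    (n : ℕ) : ∀ s t : Term F V, LevelStep R n s t → (s.mapF Sum.inl : Term (F ⊕ ℕ) V).WF ar →
      (t.mapF Sum.inl : Term (F ⊕ ℕ) V).WF ar ∧
      RedStar (SRSys R' ar mOf idx) (barT mOf (s.mapF Sum.inl))
        (guardT (barT mOf (t.mapF Sum.inl))) := by
  induction n with
  | zero => intro s t h; exact h.elim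
  | succ n ihn =>
    exact C_ctx _ (C_root hD hW hT hS n (C_star _ ihn))

end final

/-- **Soundness and completeness of the composed transformation `SR ∘ 𝕋` for
WLL DCTRSs.**  For every WLL DCTRS `R` over `F`:
(soundness) for every `s ∈ T(F,V)` and every term `t` over the signature of
`SR(𝕋(R))`, if `⟨s̄⟩ →*_{SR(𝕋(R))} t`, then `s →*_R t̂` whenever the
backtranslation `t̂` (into `T(F,V)`) is defined; and
(completeness) for all `s, t ∈ T(F,V)`, `s →*_R t` implies
`⟨s̄⟩ →*_{SR(𝕋(R))} ⟨t̄⟩`. -/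
theorem SR_T_sound_and_complete {F V : Type} [DecidableEq V]
    (R : CTRS F V) (hD : IsDCTRS R) (hW : IsWLL R)
    (R' : CTRS (F ⊕ ℕ) V) (hT : IsT R R')
    (ar mOf : (F ⊕ ℕ) → ℕ) (idx : CRule (F ⊕ ℕ) V → ℕ)
    (hS : GoodSetup R' ar mOf idx) :
    (∀ s : Term F V, (s.mapF Sum.inl).WF ar →
       ∀ t : STerm (F ⊕ ℕ) V,
         RedStar (SRSys R' ar mOf idx) (guardT (barT mOf (s.mapF Sum.inl))) t →
         ∀ (u : Term (F ⊕ ℕ) V) (u₀ : Term F V),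
           hatT ar t = some u → unliftT u = some u₀ →
           RedStar R s u₀) ∧
    (∀ s t : Term F V, (s.mapF Sum.inl).WF ar → (t.mapF Sum.inl).WF ar →
       RedStar R s t →
       RedStar (SRSys R' ar mOf idx) (guardT (barT mOf (s.mapF Sum.inl)))
         (guardT (barT mOf (t.mapF Sum.inl)))) := by
  have hS' := mkSetup hD hW hT hS
  constructor
  · intro s hs t h u u₀ hu hu0
    obtain ⟨t0, rfl, h1⟩ := T_sound hD hW hT hS.2.1 s u (SR_sound hS' hs h hu)
    rw [unliftT_lift] at hu0
    simp at hu0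
    subst hu0
    exact h1
  · intro s t hs _ h
    obtain ⟨n, hn⟩ := RedStar.level h
    exact (C_star _ (C_level hD hW hT hS' n) s t hn hs).2
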